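/- Let (V, f) be a finite-dimensional nondegenerate symmetric bilinear space over a field K with char K ≠ 2, with dim V ≡ 2 (mod 4), and let φ ∈ SO(V). Then φ is bireflectional in SO(V) if and only if φ has an orthogonal summand of odd dimension, i.e., there exists a nonzero nondegenerate φ-invariant subspace of V of odd dimension. -/

import Mathlib

open Polynomial Module

namespace Biref

variable {K V : Type*} [Field K] [AddCommGroup V] [Module K V]

/-- The orthogonal group of a bilinear form: all linear automorphisms preserving `f`. -/
def orthGroup (f : LinearMap.BilinForm K V) : Subgroup (V ≃ₗ[K] V) where
  carrier := {φ | ∀ x y : V, f (φ x) (φ y) = f x y}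
  one_mem' := fun _ _ => rfl
  mul_mem' := by
    intro a b ha hb x y
    simpa using (ha (b x) (b y)).trans (hb x y)
  inv_mem' := by
    intro a ha x y
    show f (a.symm x) (a.symm y) = f x y
    conv_rhs => rw [← a.apply_symm_apply x, ← a.apply_symm_apply y]
    exact (ha _ _).symm

/-- The special orthogonal group: isometries of determinant 1. -/
def specialOrthGroup (f : LinearMap.BilinForm K V) : Subgroup (V ≃ₗ[K] V) where
  carrier := {φ | (∀ x y : V, f (φ x) (φ y) = f x y) ∧
      LinearMap.det (φ : V →ₗ[K] V) = 1}
  one_mem' := ⟨fun _ _ => rfl, by simp⟩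
  mul_mem' := by
    rintro a b ⟨ha, ha'⟩ ⟨hb, hb'⟩
    refine ⟨fun x y => by simpa using (ha (b x) (b y)).trans (hb x y), ?_⟩
    rw [LinearEquiv.coe_toLinearMap_mul, map_mul, ha', hb', one_mul]
  inv_mem' := by
    rintro a ⟨ha, ha'⟩
    refine ⟨fun x y => ?_, ?_⟩
    · show f (a.symm x) (a.symm y) = f x y
      conv_rhs => rw [← a.apply_symm_apply x, ← a.apply_symm_apply y]
      exact (ha _ _).symm
    · have h1 : LinearMap.det ((a⁻¹ * a : V ≃ₗ[K] V) : V →ₗ[K] V) = 1 := by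
        rw [inv_mul_cancel, LinearEquiv.coe_toLinearMap_one, LinearMap.det_id]
      rw [LinearEquiv.coe_toLinearMap_mul, map_mul, ha', mul_one] at h1
      exact h1

/-- The commutator subgroup `Ω(V)` of the orthogonal group. -/
def omegaGroup (f : LinearMap.BilinForm K V) : Subgroup (V ≃ₗ[K] V) :=
  ⁅orthGroup f, orthGroup f⁆

/-- `g` is a product of two involutions lying in the subgroup `H`. -/
def IsBireflectionalIn {G : Type*} [Group G] (H : Subgroup G) (g : G) : Prop :=
  ∃ σ τ : G, σ ∈ H ∧ τ ∈ H ∧ σ ^ 2 = 1 ∧ τ ^ 2 = 1 ∧ g = σ * τ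

/-- `g` is bireflectional in the group `G`. -/
def IsBireflectional {G : Type*} [Group G] (g : G) : Prop :=
  ∃ σ τ : G, σ ^ 2 = 1 ∧ τ ^ 2 = 1 ∧ g = σ * τ

/-- `g` is reversed by some element of `H`. -/
def IsReversibleIn {G : Type*} [Group G] (H : Subgroup G) (g : G) : Prop :=
  ∃ α : G, α ∈ H ∧ α * g * α⁻¹ = g⁻¹

/-- A subspace is invariant under an endomorphism. -/
def Invt (ψ : V →ₗ[K] V) (U : Submodule K V) : Prop :=
  ∀ x ∈ U, ψ x ∈ U

/-- The discriminant of a (finite-dimensional, nondegenerate) bilinear space is the class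
of `d` in `K*/(K*)²`: some Gram determinant equals `d` times a nonzero square. -/
def HasDisc (f : LinearMap.BilinForm K V) (d : K) : Prop :=
  ∃ (b : Basis (Fin (Module.finrank K V)) K V) (c : Kˣ),
    (Matrix.of fun i j => f (b i) (b j)).det = d * (c : K) ^ 2

/-- A nondegenerate symmetric bilinear space is hyperbolic iff its Witt index is half its
dimension, i.e. there is a totally isotropic subspace of half the dimension. -/
def IsHyperbolicSpace (f : LinearMap.BilinForm K V) : Prop :=
  ∃ W : Submodule K V, (∀ x ∈ W, ∀ y ∈ W, f x y = 0) ∧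
    2 * Module.finrank K W = Module.finrank K V

/-- The multiplicity of `p ^ d` as an elementary divisor of `φ`. -/
noncomputable def edMult (φ : Module.End K V) (p : K[X]) (d : ℕ) : ℕ :=
  (2 * Module.finrank K (LinearMap.ker (Polynomial.aeval φ p ^ d))
    - Module.finrank K (LinearMap.ker (Polynomial.aeval φ p ^ (d + 1)))
    - Module.finrank K (LinearMap.ker (Polynomial.aeval φ p ^ (d - 1)))) / p.natDegree

/-- `n_j(φ)`: the number of elementary divisors `(x ± 1) ^ d` of `φ` with `d ≡ j mod 8`,
counted with multiplicity. -/
noncomputable def nPM [FiniteDimensional K V] (φ : Module.End K V) (j : ℕ) : ℕ :=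
  ∑ d ∈ Finset.range (Module.finrank K V + 1),
    if d % 8 = j % 8 then edMult φ (X - 1) d + edMult φ (X + 1) d else 0

/-- The Fitting one space `Bahn^∞(ψ) = ⋂ⱼ im (ψ - 1)^j`. -/
noncomputable def bahnInf (ψ : Module.End K V) : Submodule K V :=
  ⨅ j : ℕ, LinearMap.range ((ψ - 1) ^ j)

/-- The `K[x]`-submodule generated by `v` (`x` acting as `ψ`). -/
def cycSub (ψ : Module.End K V) (v : V) : Submodule K V :=
  Submodule.span K (Set.range fun n : ℕ => (ψ ^ n) v)

/-- `V` is a cyclic `K[x]`-module, `x` acting as `ψ`. -/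
def IsCyclicEnd (ψ : Module.End K V) : Prop :=
  ∃ v : V, cycSub ψ v = ⊤

/-- `V` is a direct sum of two cyclic `K[x]`-submodules, `x` acting as `ψ`. -/
def IsBicyclicEnd (ψ : Module.End K V) : Prop :=
  ∃ v w : V, cycSub ψ v ⊓ cycSub ψ w = ⊥ ∧ cycSub ψ v ⊔ cycSub ψ w = ⊤

/-- `V` is an indecomposable `K[x]`-module, `x` acting as `ψ`. -/
def ModIndec (ψ : Module.End K V) : Prop :=
  (⊥ : Submodule K V) ≠ ⊤ ∧
    ¬∃ A B : Submodule K V, Invt ψ A ∧ Invt ψ B ∧ A ≠ ⊥ ∧ B ≠ ⊥ ∧ A ⊓ B = ⊥ ∧ A ⊔ B = ⊤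

/-- `ψ` is orthogonally indecomposable w.r.t. `f`: `V ≠ 0` and the only nondegenerate
invariant subspaces are `0` and `V`. -/
def OrthIndec (f : LinearMap.BilinForm K V) (ψ : Module.End K V) : Prop :=
  (⊥ : Submodule K V) ≠ ⊤ ∧
    ∀ U : Submodule K V, Invt ψ U → (f.restrict U).Nondegenerate → U = ⊥ ∨ U = ⊤

/-- The Witt index: the dimension of a maximal totally isotropic subspace. -/
noncomputable def wittIndex (f : LinearMap.BilinForm K V) : ℕ :=
  sSup {n | ∃ W : Submodule K V, (∀ x ∈ W, ∀ y ∈ W, f x y = 0) ∧ Module.finrank K W = n}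



section

def Nd (f : LinearMap.BilinForm K V) (U : Submodule K V) : Prop :=
  ∀ x ∈ U, (∀ y ∈ U, f x y = 0) → x = 0

lemma nd_iff {f : LinearMap.BilinForm K V} (hs : f.IsSymm) (U : Submodule K V) :
    (f.restrict U).Nondegenerate ↔ Nd f U := by
  constructor
  · intro h x hx hy
    have := h.1 ⟨x, hx⟩ (fun y => hy y y.2)
    simpa using this
  · intro h
    refine ⟨fun x hx => ?_, fun x hx => ?_⟩
    · exact Subtype.ext (h x x.2 (fun y hy => hx ⟨y, hy⟩))
    · refine Subtype.ext (h x x.2 (fun y hy => ?_))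
      rw [hs.eq]
      exact hx ⟨y, hy⟩

lemma nd_sup_eq [FiniteDimensional K V] {f : LinearMap.BilinForm K V} (hs : f.IsSymm)
    {W U : Submodule K V} (hW : Nd f W) (hWU : W ≤ U) : W ⊔ (U ⊓ f.orthogonal W) = U := by
  have h := (LinearMap.BilinForm.isCompl_orthogonal_of_restrict_nondegenerate hs.isRefl
    ((nd_iff hs W).2 hW)).sup_eq_top
  rw [inf_comm, ← sup_inf_assoc_of_le _ hWU, h, top_inf_eq]

lemma nd_left {f : LinearMap.BilinForm K V}
    {A B : Submodule K V} (hAB : ∀ a ∈ A, ∀ b ∈ B, f a b = 0) (h : Nd f (A ⊔ B)) : Nd f A := by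
  intro x hx hy
  refine h x (Submodule.mem_sup_left hx) (fun y hy' => ?_)
  obtain ⟨a, ha, b, hb, rfl⟩ := Submodule.mem_sup.1 hy'
  rw [map_add, hy a ha, hAB x hx b hb, add_zero]

lemma nd_right {f : LinearMap.BilinForm K V} (hs : f.IsSymm)
    {A B : Submodule K V} (hAB : ∀ a ∈ A, ∀ b ∈ B, f a b = 0) (h : Nd f (A ⊔ B)) : Nd f B := by
  rw [sup_comm] at h
  exact nd_left (fun b hb a ha => by rw [hs.eq]; exact hAB a ha b hb) h

lemma nd_sup {f : LinearMap.BilinForm K V} (hs : f.IsSymm)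
    {A B : Submodule K V} (hAB : ∀ a ∈ A, ∀ b ∈ B, f a b = 0) (hA : Nd f A) (hB : Nd f B) :
    Nd f (A ⊔ B) := by
  intro x hx hy
  obtain ⟨a, ha, b, hb, rfl⟩ := Submodule.mem_sup.1 hx
  have h1 : a = 0 := hA a ha (fun y hy' => by
    have := hy y (Submodule.mem_sup_left hy')
    rwa [map_add, LinearMap.add_apply, hs.eq b y, hAB y hy' b hb, add_zero] at this)
  have h2 : b = 0 := hB b hb (fun y hy' => by
    have := hy y (Submodule.mem_sup_right hy')
    rwa [map_add, LinearMap.add_apply, hAB a ha y hy', zero_add] at this)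
  rw [h1, h2, add_zero]

lemma mem_of_double [FiniteDimensional K V] {f : LinearMap.BilinForm K V} (hs : f.IsSymm)
    {M U : Submodule K V} (hU : Nd f U) (hMU : M ≤ U) {z : V} (hz : z ∈ U)
    (h : ∀ v ∈ U, (∀ m ∈ M, f m v = 0) → f z v = 0) : z ∈ M := by
  have hs' : (f.restrict U).IsSymm := ⟨fun x y => hs.eq x y⟩
  have := LinearMap.BilinForm.orthogonal_orthogonal ((nd_iff hs U).2 hU) hs'.isRefl
    (M.comap U.subtype)
  have hz' : (⟨z, hz⟩ : U) ∈ M.comap U.subtype := by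
    rw [← this, LinearMap.BilinForm.mem_orthogonal_iff]
    intro v hv
    rw [LinearMap.BilinForm.mem_orthogonal_iff] at hv
    change f v z = 0
    rw [hs.eq]
    exact h v v.2 (fun m hm => hv ⟨m, hMU hm⟩ hm)
  exact hz'

lemma rk_add [FiniteDimensional K V] (T : Module.End K V) (U : Submodule K V) :
    finrank K (U.map T) + finrank K (U ⊓ LinearMap.ker T : Submodule K V) = finrank K U := by
  have h := LinearMap.finrank_range_add_finrank_ker (T.domRestrict U)
  rw [LinearMap.range_domRestrict, LinearMap.ker_domRestrict] at h
  rw [← h, ← LinearEquiv.finrank_eq (Submodule.comapSubtypeEquivOfLe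
    (inf_le_left : U ⊓ LinearMap.ker T ≤ U))]
  have : (U ⊓ LinearMap.ker T).comap U.subtype = (LinearMap.ker T).comap U.subtype := by
    ext x; simp
  rw [this]

lemma pow_inv {T : Module.End K V} {U : Submodule K V} (hT : ∀ x ∈ U, T x ∈ U) (n : ℕ) :
    ∀ x ∈ U, (T ^ n) x ∈ U := by
  induction n with
  | zero => intro x hx; simpa using hx
  | succ n ih => intro x hx; rw [pow_succ', Module.End.mul_apply]; exact hT _ (ih x hx)

lemma surj_of_inj [FiniteDimensional K V] {T : Module.End K V} {U : Submodule K V}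
    (hT : ∀ x ∈ U, T x ∈ U) (hi : ∀ x ∈ U, T x = 0 → x = 0) :
    ∀ y ∈ U, ∃ x ∈ U, T x = y := by
  have h := rk_add T U
  have h0 : U ⊓ LinearMap.ker T = ⊥ := by
    rw [eq_bot_iff]; rintro x ⟨hx, hx'⟩; exact hi x hx hx'
  rw [h0, finrank_bot, add_zero] at h
  have h1 : U.map T = U := Submodule.eq_of_le_of_finrank_eq
    (Submodule.map_le_iff_le_comap.2 hT) h
  intro y hy
  rw [← h1] at hy
  exact Submodule.mem_map.1 hy

lemma ker_stab [FiniteDimensional K V] (T : Module.End K V) {m : ℕ} {x : V}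
    (h : (T ^ m) x = 0) : (T ^ finrank K V) x = 0 := by
  rcases le_total m (finrank K V) with hm | hm
  · rw [← Nat.sub_add_cancel hm, pow_add, Module.End.mul_apply, h, map_zero]
  · have := Module.End.ker_pow_eq_ker_pow_finrank_of_le (f := T) hm
    rw [← LinearMap.mem_ker, ← this]; exact h

lemma fitting [FiniteDimensional K V] {T : Module.End K V} {U : Submodule K V}
    (hT : ∀ x ∈ U, T x ∈ U) :
    (U ⊓ LinearMap.ker (T ^ finrank K V)) ⊔ U.map (T ^ finrank K V) = U := by
  set n := finrank K V
  have h := rk_add (T ^ n) U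
  have hle : (U ⊓ LinearMap.ker (T ^ n)) ⊔ U.map (T ^ n) ≤ U :=
    sup_le inf_le_left (Submodule.map_le_iff_le_comap.2 (pow_inv hT n))
  have hd : (U ⊓ LinearMap.ker (T ^ n)) ⊓ U.map (T ^ n) = ⊥ := by
    rw [eq_bot_iff]
    rintro x ⟨⟨hx, hx1⟩, hx2⟩
    obtain ⟨y, hy, rfl⟩ := Submodule.mem_map.1 hx2
    replace hx1 : (T ^ n) ((T ^ n) y) = 0 := hx1
    rw [← Module.End.mul_apply, ← pow_add] at hx1
    simpa using ker_stab T hx1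
  refine Submodule.eq_of_le_of_finrank_eq hle ?_
  have h3 := Submodule.finrank_sup_add_finrank_inf_eq (U ⊓ LinearMap.ker (T ^ n)) (U.map (T ^ n))
  rw [hd, finrank_bot] at h3
  omega

/-- polarization -/
lemma polar {f : LinearMap.BilinForm K V} (h2 : (2 : K) ≠ 0) {U : Submodule K V}
    {T : Module.End K V} (hT : ∀ x ∈ U, ∀ y ∈ U, f (T x) y = f (T y) x)
    {x y : V} (hx : x ∈ U) (hy : y ∈ U) (h : f (T x) y ≠ 0) : ∃ v ∈ U, f (T v) v ≠ 0 := by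
  by_contra! hc
  have h1 := hc (x + y) (U.add_mem hx hy)
  simp only [map_add, LinearMap.add_apply, hc x hx, hc y hy, hT y hy x hx] at h1
  apply h
  have : (2 : K) * f (T x) y = 0 := by linear_combination h1
  exact (mul_eq_zero.1 this).resolve_left h2

lemma L1 (D : Module.End K V) {e : ℕ} {v : V} (l : V →ₗ[K] K) (hd : (D ^ (e+1)) v = 0)
    (hl : l ((D ^ e) v) ≠ 0) (a : K[X]) (h : ∀ k, l ((D ^ k) (aeval D a v)) = 0) :
    X ^ (e+1) ∣ a := by
  suffices H : ∀ j ≤ e + 1, X ^ j ∣ a from H _ le_rfl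
  intro j
  induction j with
  | zero => intro _; simp
  | succ j ih =>
    intro hj
    obtain ⟨b, rfl⟩ := ih (by omega)
    rw [pow_succ]
    refine mul_dvd_mul_left _ (X_dvd_iff.2 ?_)
    have h1 := h (e - j)
    obtain ⟨c, hc⟩ : X ∣ b - C (b.coeff 0) := by rw [X_dvd_iff]; simp
    have hb : b = X * c + C (b.coeff 0) := by rw [← hc]; ring
    have e1 : (D ^ (e - j)) (aeval D (X ^ j * b) v) = b.coeff 0 • (D ^ e) v := by
      have : (D ^ (e - j)) (aeval D (X ^ j * b) v) = aeval D (X ^ (e-j) * (X ^ j * b)) v := by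
        simp [Module.End.mul_apply]
      rw [this, ← mul_assoc, ← pow_add, Nat.sub_add_cancel (by omega)]
      have : X ^ e * b = c * X ^ (e+1) + C (b.coeff 0) * X ^ e := by
        conv_lhs => rw [hb]
        ring
      rw [this]
      simp [Module.End.mul_apply, hd]
    rw [e1, map_smul, smul_eq_mul] at h1
    exact (mul_eq_zero.1 h1).resolve_right hl

lemma L2 (D : Module.End K V) {e : ℕ} {u v : V} (l m : V →ₗ[K] K) (hu : (D ^ (e+1)) u = 0)
    (hv : (D ^ (e+1)) v = 0)
    (hlu : l ((D ^ e) u) ≠ 0) (hlv : l ((D ^ e) v) = 0)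
    (hmu : m ((D ^ e) u) = 0) (hmv : m ((D ^ e) v) ≠ 0) (a b : K[X])
    (h : ∀ k, l ((D ^ k) (aeval D a u + aeval D b v)) = 0)
    (h' : ∀ k, m ((D ^ k) (aeval D a u + aeval D b v)) = 0) :
    X ^ (e+1) ∣ a ∧ X ^ (e+1) ∣ b := by
  suffices H : ∀ j ≤ e + 1, X ^ j ∣ a ∧ X ^ j ∣ b from H _ le_rfl
  have key : ∀ j ≤ e, ∀ (w : V) (p : K[X]), (D ^ (e+1)) w = 0 →
      (D ^ (e - j)) (aeval D (X ^ j * p) w) = p.coeff 0 • (D ^ e) w := by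
    intro j hj w p hw
    obtain ⟨c, hc⟩ : X ∣ p - C (p.coeff 0) := by rw [X_dvd_iff]; simp
    have hb : p = X * c + C (p.coeff 0) := by rw [← hc]; ring
    have : (D ^ (e - j)) (aeval D (X ^ j * p) w) = aeval D (X ^ (e-j) * (X ^ j * p)) w := by
      simp [Module.End.mul_apply]
    rw [this, ← mul_assoc, ← pow_add, Nat.sub_add_cancel (by omega)]
    have : X ^ e * p = c * X ^ (e+1) + C (p.coeff 0) * X ^ e := by
      conv_lhs => rw [hb]
      ring
    rw [this]
    simp [Module.End.mul_apply, hw]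
  intro j
  induction j with
  | zero => intro _; simp
  | succ j ih =>
    intro hj
    obtain ⟨⟨a, rfl⟩, ⟨b, rfl⟩⟩ := ih (by omega)
    have h1 := h (e - j)
    have h2 := h' (e - j)
    rw [map_add, key j (by omega) u a hu, key j (by omega) v b hv] at h1 h2
    simp only [map_add, map_smul, hlv, hmu, smul_eq_mul, mul_zero, add_zero, zero_add] at h1 h2
    rw [pow_succ]
    exact ⟨mul_dvd_mul_left _ (X_dvd_iff.2 ((mul_eq_zero.1 h1).resolve_right hlu)),
      mul_dvd_mul_left _ (X_dvd_iff.2 ((mul_eq_zero.1 h2).resolve_right hmv))⟩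

end


section

lemma aeval_inv {S : Module.End K V} {U : Submodule K V} (hS : ∀ x ∈ U, S x ∈ U) (a : K[X]) :
    ∀ x ∈ U, aeval S a x ∈ U := by
  induction a using Polynomial.induction_on' with
  | add p q hp hq => intro x hx; rw [map_add]; exact U.add_mem (hp x hx) (hq x hx)
  | monomial n c =>
    intro x hx
    rw [aeval_monomial, Module.End.mul_apply, Module.algebraMap_end_apply]
    exact U.smul_mem _ (pow_inv hS n x hx)

lemma pow_adj {f : LinearMap.BilinForm K V} {S : Module.End K V} {U : Submodule K V}
    (hS : ∀ x ∈ U, S x ∈ U) (ha : ∀ x ∈ U, ∀ y ∈ U, f (S x) y = f x (S y)) (n : ℕ) :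
    ∀ x ∈ U, ∀ y ∈ U, f ((S ^ n) x) y = f x ((S ^ n) y) := by
  induction n with
  | zero => intro x hx y hy; simp
  | succ n ih =>
    intro x hx y hy
    rw [pow_succ', Module.End.mul_apply, ha _ (pow_inv hS n x hx) _ hy, ih x hx _ (hS y hy),
      ← Module.End.mul_apply, ← pow_succ, pow_succ']

lemma aeval_adj {f : LinearMap.BilinForm K V} {S : Module.End K V} {U : Submodule K V}
    (hS : ∀ x ∈ U, S x ∈ U) (ha : ∀ x ∈ U, ∀ y ∈ U, f (S x) y = f x (S y)) (a : K[X]) :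
    ∀ x ∈ U, ∀ y ∈ U, f (aeval S a x) y = f x (aeval S a y) := by
  induction a using Polynomial.induction_on' with
  | add p q hp hq =>
    intro x hx y hy
    simp only [map_add, LinearMap.add_apply, hp x hx y hy, hq x hx y hy]
  | monomial n c =>
    intro x hx y hy
    simp only [aeval_monomial, Module.End.mul_apply, Module.algebraMap_end_apply, map_smul,
      LinearMap.smul_apply, pow_adj hS ha n x hx y hy]

structure SkewOn (f : LinearMap.BilinForm K V) (C : Module.End K V) (U : Submodule K V) : Prop where
  inv : ∀ x ∈ U, C x ∈ U
  skew : ∀ x ∈ U, ∀ y ∈ U, f (C x) y = - f x (C y)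

variable {f : LinearMap.BilinForm K V} {C : Module.End K V} {U : Submodule K V}

lemma SkewOn.mono (h : SkewOn f C U) {W : Submodule K V} (hW : W ≤ U) (hi : ∀ x ∈ W, C x ∈ W) :
    SkewOn f C W := ⟨hi, fun x hx y hy => h.skew x (hW hx) y (hW hy)⟩

lemma SkewOn.sq_inv (h : SkewOn f C U) : ∀ x ∈ U, (C ^ 2) x ∈ U := pow_inv h.inv 2

lemma SkewOn.pow (h : SkewOn f C U) (k : ℕ) : ∀ x ∈ U, ∀ y ∈ U,
    f ((C ^ k) x) y = (-1) ^ k * f x ((C ^ k) y) := by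
  induction k with
  | zero => intro x hx y hy; simp
  | succ n ih =>
    intro x hx y hy
    rw [pow_succ', Module.End.mul_apply, h.skew _ (pow_inv h.inv n x hx) _ hy,
      ih x hx _ (h.inv y hy), ← Module.End.mul_apply, ← pow_succ, pow_succ' C, pow_succ]
    ring

lemma SkewOn.sq_adj (h : SkewOn f C U) : ∀ x ∈ U, ∀ y ∈ U, f ((C ^ 2) x) y = f x ((C ^ 2) y) := by
  intro x hx y hy
  rw [h.pow 2 x hx y hy]; ring

lemma ae_comm (C : Module.End K V) (a : K[X]) (x : V) :
    aeval (C ^ 2) a (C x) = C (aeval (C ^ 2) a x) := by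
  have h : aeval (C ^ 2) a = aeval C (a.comp (X ^ 2)) := by rw [aeval_comp]; simp
  rw [h]
  have : aeval C (a.comp (X ^ 2) * X) x = aeval C (X * a.comp (X ^ 2)) x := by rw [mul_comm]
  simpa only [map_mul, aeval_X, Module.End.mul_apply] using this

def Ev (C : Module.End K V) (v : V) : Submodule K V where
  carrier := {w | ∃ a : K[X], aeval (C ^ 2) a v = w}
  zero_mem' := ⟨0, by simp⟩
  add_mem' := by
    rintro _ _ ⟨a, rfl⟩ ⟨b, rfl⟩
    exact ⟨a + b, by simp⟩
  smul_mem' := by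
    rintro c _ ⟨a, rfl⟩
    exact ⟨c • a, by simp⟩

def Od (C : Module.End K V) (v : V) : Submodule K V := (Ev C v).map C

lemma mem_Ev {v w : V} : w ∈ Ev C v ↔ ∃ a : K[X], aeval (C ^ 2) a v = w := Iff.rfl

lemma mem_Od {v w : V} : w ∈ Od C v ↔ ∃ a : K[X], C (aeval (C ^ 2) a v) = w := by
  constructor
  · rintro ⟨_, ⟨a, rfl⟩, rfl⟩; exact ⟨a, rfl⟩
  · rintro ⟨a, rfl⟩; exact ⟨_, ⟨a, rfl⟩, rfl⟩

lemma self_mem_Ev (v : V) : v ∈ Ev C v := ⟨1, by simp⟩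

lemma Ev_Od {v : V} : ∀ x ∈ Ev C v, C x ∈ Od C v := fun x hx => ⟨x, hx, rfl⟩

lemma Od_Ev {v : V} : ∀ x ∈ Od C v, C x ∈ Ev C v := by
  rintro _ ⟨_, ⟨a, rfl⟩, rfl⟩
  exact ⟨X * a, by simp [pow_two, Module.End.mul_apply]⟩

lemma Ev_le (h : SkewOn f C U) {v : V} (hv : v ∈ U) : Ev C v ≤ U := by
  rintro _ ⟨a, rfl⟩
  exact aeval_inv h.sq_inv a v hv

lemma Od_le (h : SkewOn f C U) {v : V} (hv : v ∈ U) : Od C v ≤ U := by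
  rintro _ ⟨x, hx, rfl⟩
  exact h.inv _ (Ev_le h hv hx)

lemma Ev_poly {v w : V} (h : w ∈ Ev C v) : ∃ p : K[X], aeval C p v = w := by
  obtain ⟨a, rfl⟩ := h
  exact ⟨a.comp (X ^ 2), by rw [aeval_comp]; simp⟩

lemma Od_poly {v w : V} (h : w ∈ Od C v) : ∃ p : K[X], aeval C p v = w := by
  obtain ⟨x, hx, rfl⟩ := h
  obtain ⟨p, rfl⟩ := Ev_poly hx
  exact ⟨X * p, by simp [Module.End.mul_apply]⟩

lemma Ev_Od_orth (hs : f.IsSymm) (h2 : (2 : K) ≠ 0) (h : SkewOn f C U) {v : V} (hv : v ∈ U) :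
    ∀ p ∈ Ev C v, ∀ q ∈ Od C v, f p q = 0 := by
  rintro _ ⟨a, rfl⟩ _ ⟨_, ⟨b, rfl⟩, rfl⟩
  have ha := aeval_inv h.sq_inv a v hv
  have hb := aeval_inv h.sq_inv b v hv
  have e1 : f (aeval (C ^ 2) a v) (C (aeval (C ^ 2) b v))
      = f v (C (aeval (C ^ 2) (a * b) v)) := by
    rw [aeval_adj h.sq_inv h.sq_adj a v hv _ (h.inv _ hb), ae_comm, map_mul, Module.End.mul_apply]
  have e2 : f (aeval (C ^ 2) a v) (C (aeval (C ^ 2) b v))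
      = - f v (C (aeval (C ^ 2) (a * b) v)) := by
    have := h.skew _ ha _ hb
    rw [hs.eq, aeval_adj h.sq_inv h.sq_adj b v hv _ (h.inv _ ha), ae_comm,
      ← Module.End.mul_apply (aeval (C^2) b), ← map_mul, mul_comm b] at this
    linear_combination this
  have : (2 : K) * f (aeval (C ^ 2) a v) (C (aeval (C ^ 2) b v)) = 0 := by
    linear_combination e1 + e2
  exact (mul_eq_zero.1 this).resolve_left h2

def Good (f : LinearMap.BilinForm K V) (C : Module.End K V) (W P Q : Submodule K V) : Prop :=
  P ⊔ Q = W ∧ (∀ p ∈ P, ∀ q ∈ Q, f p q = 0) ∧ (∀ p ∈ P, C p ∈ Q) ∧ (∀ q ∈ Q, C q ∈ P)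

lemma Good.inv {W P Q : Submodule K V} (h : Good f C W P Q) : ∀ x ∈ W, C x ∈ W := by
  intro x hx
  rw [← h.1] at hx ⊢
  obtain ⟨p, hp, q, hq, rfl⟩ := Submodule.mem_sup.1 hx
  rw [map_add]
  exact add_mem (Submodule.mem_sup_right (h.2.2.1 p hp)) (Submodule.mem_sup_left (h.2.2.2 q hq))

lemma good_cyc (hs : f.IsSymm) (h2 : (2 : K) ≠ 0) (h : SkewOn f C U) {v : V} (hv : v ∈ U) :
    Good f C (Ev C v ⊔ Od C v) (Ev C v) (Od C v) :=
  ⟨rfl, Ev_Od_orth hs h2 h hv, Ev_Od, Od_Ev⟩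

/-- existence of a nonzero good nondegenerate piece -/
def Key (f : LinearMap.BilinForm K V) (C : Module.End K V) (U : Submodule K V) : Prop :=
  ∃ W P Q : Submodule K V, W ≠ ⊥ ∧ W ≤ U ∧ Nd f W ∧ Good f C W P Q

lemma key_inv [FiniteDimensional K V] (hs : f.IsSymm) (h2 : (2 : K) ≠ 0) (h : SkewOn f C U)
    (hU : Nd f U) (hU0 : U ≠ ⊥) (hi : ∀ x ∈ U, C x = 0 → x = 0) : Key f C U := by
  set S := C ^ 2 with hS
  -- irreducible polynomial
  obtain ⟨p, hp, x0, hx0, hpx, hx00⟩ : ∃ p : K[X], Irreducible p ∧ ∃ x ∈ U, aeval S p x = 0 ∧ x ≠ 0 := by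
    by_contra! hc
    have key : ∀ a : K[X], a ≠ 0 → ∀ x ∈ U, aeval S a x = 0 → x = 0 := by
      intro a
      induction a using WfDvdMonoid.induction_on_irreducible with
      | zero => intro h; exact absurd rfl h
      | unit u hu =>
        intro _ x hx hux
        obtain ⟨c, hc, rfl⟩ := Polynomial.isUnit_iff.1 hu
        rw [aeval_C, Module.algebraMap_end_apply] at hux
        exact (smul_eq_zero.1 hux).resolve_left hc.ne_zero
      | mul a i ha hi ih =>
        intro _ x hx hx0
        rw [map_mul, Module.End.mul_apply] at hx0
        exact ih ha x hx (hc i hi _ (aeval_inv h.sq_inv a x hx) hx0)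
    obtain ⟨x, hx, hx0⟩ := Submodule.exists_mem_ne_zero_of_ne_bot hU0
    exact hx0 (key (minpoly K S) (minpoly.ne_zero (Algebra.IsIntegral.isIntegral S)) x hx (by simp))
  set n := finrank K V
  set T := aeval S p with hT
  have hTinv : ∀ x ∈ U, T x ∈ U := aeval_inv h.sq_inv p
  have hTadj : ∀ x ∈ U, ∀ y ∈ U, f (T x) y = f x (T y) := aeval_adj h.sq_inv h.sq_adj p
  have hfit := fitting hTinv
  have hnd : Nd f (U ⊓ LinearMap.ker (T ^ n)) := by
    refine nd_left (B := U.map (T ^ n)) ?_ (by rw [hfit]; exact hU)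
    rintro a ⟨ha, ha'⟩ _ ⟨b, hb, rfl⟩
    rw [← pow_adj hTinv hTadj n a ha b hb, LinearMap.mem_ker.1 ha']
    simp
  set A := U ⊓ LinearMap.ker (T ^ n) with hA
  have hAU : A ≤ U := inf_le_left
  have hx0A : x0 ∈ A := ⟨hx0, ker_stab T (m := 1) (by simpa using hpx)⟩
  have hex : ∃ k, ∀ x ∈ A, (T ^ k) x = 0 := ⟨n, fun x hx => hx.2⟩
  classical
  obtain ⟨e, he⟩ : ∃ e, Nat.find hex = e + 1 := by
    apply Nat.exists_eq_succ_of_ne_zero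
    intro h0
    have := Nat.find_spec hex x0 hx0A
    rw [h0] at this
    exact hx00 (by simpa using this)
  have hz : ∀ x ∈ A, (T ^ (e+1)) x = 0 := he ▸ Nat.find_spec hex
  have hnz := Nat.find_min hex (m := e) (by omega)
  push Not at hnz
  obtain ⟨x, hx, hxe⟩ := hnz
  have hTA : ∀ x ∈ A, T x ∈ A := by
    rintro x ⟨hx, hx'⟩
    refine ⟨hTinv x hx, ker_stab T (m := n) ?_⟩
    rw [← Module.End.mul_apply, ← pow_succ, pow_succ', Module.End.mul_apply,
      LinearMap.mem_ker.1 hx', map_zero]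
  have : ∃ y ∈ A, f ((T ^ e) x) y ≠ 0 := by
    by_contra! hc
    exact hxe (hnd _ (pow_inv hTA e x hx) hc)
  obtain ⟨y, hy, hxy⟩ := this
  obtain ⟨v, hv, hvv⟩ := polar h2 (T := T ^ e) (U := A) (fun x hx y hy => by
    rw [pow_adj hTinv hTadj e x (hAU hx) y (hAU hy), hs.eq]) hx hy hxy
  have hvU := hAU hv
  -- Ev is nondegenerate in the strong sense
  have hev : ∀ a : K[X], (∀ c : K[X], f (aeval S a v) (aeval S c v) = 0) → aeval S a v = 0 := by
    intro a ha
    by_contra hne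
    have hnd : ¬ p ^ (e+1) ∣ a := by
      rintro ⟨b, rfl⟩
      apply hne
      rw [mul_comm, map_mul, Module.End.mul_apply, map_pow, hz v hv, map_zero]
    have ha0 : a ≠ 0 := by rintro rfl; exact hne (by simp)
    have hfin : FiniteMultiplicity p a :=
      FiniteMultiplicity.of_not_isUnit hp.not_isUnit ha0
    obtain ⟨a', hpa, hna⟩ := hfin.exists_eq_pow_mul_and_not_dvd
    set j := multiplicity p a
    have hj : j ≤ e := by
      by_contra! hj
      exact hnd ((pow_dvd_pow p hj).trans ⟨a', hpa⟩)
    obtain ⟨r, t, hrt⟩ := (hp.coprime_iff_not_dvd.2 hna)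
    have e1 : p ^ e = (p ^ (e - j) * t) * a + r * p ^ (e+1) := by
      have : p ^ e = p ^ (e - j) * p ^ j := by rw [← pow_add, Nat.sub_add_cancel hj]
      calc p ^ e = p ^ e * (r * p + t * a') := by rw [hrt, mul_one]
        _ = (p ^ (e - j) * p ^ j) * (t * a') + r * p ^ (e+1) := by rw [← this]; ring
        _ = _ := by conv_rhs => rw [hpa]
                    ring
    apply hvv
    have e2 : (T ^ e) v = aeval S (p ^ (e - j) * t) (aeval S a v) := by
      rw [hT, ← map_pow, e1, map_add, LinearMap.add_apply, map_mul, map_mul _ r,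
        Module.End.mul_apply, Module.End.mul_apply, map_pow _ p (e+1), hz v hv, map_zero, add_zero]
    rw [e2, aeval_adj h.sq_inv h.sq_adj _ _ (aeval_inv h.sq_inv _ _ hvU) _ hvU]
    exact ha _
  refine ⟨Ev C v ⊔ Od C v, Ev C v, Od C v, ?_, sup_le (Ev_le h hvU) (Od_le h hvU), ?_,
    good_cyc hs h2 h hvU⟩
  · intro h0
    have : v ∈ Ev C v ⊔ Od C v := Submodule.mem_sup_left (self_mem_Ev v)
    rw [h0, Submodule.mem_bot] at this
    rw [this] at hvv
    simp at hvv
  · refine nd_sup hs (Ev_Od_orth hs h2 h hvU) ?_ ?_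
    · rintro _ ⟨a, rfl⟩ hy
      exact hev a (fun c => hy _ ⟨c, rfl⟩)
    · intro w hw hy
      obtain ⟨a, rfl⟩ := mem_Od.1 hw
      have hau := aeval_inv h.sq_inv a v hvU
      apply hi _ (h.inv _ hau)
      have := hev (X * a) (fun c => by
        have h3 := hy _ (mem_Od.2 ⟨c, rfl⟩)
        have hcu := aeval_inv h.sq_inv c v hvU
        rw [hs.eq, h.skew _ hcu _ (h.inv _ hau), hs.eq] at h3
        rw [map_mul, Module.End.mul_apply, aeval_X, hS, pow_two, Module.End.mul_apply]
        simpa [pow_two] using h3)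
      rw [map_mul, Module.End.mul_apply, aeval_X, hS, pow_two, Module.End.mul_apply] at this
      simpa [pow_two] using this

end


section

variable {f : LinearMap.BilinForm K V} {C : Module.End K V} {U : Submodule K V}

lemma aeval_dvd_zero {D : Module.End K V} {m : ℕ} {v : V} (hv : (D ^ m) v = 0) {a : K[X]}
    (h : X ^ m ∣ a) : aeval D a v = 0 := by
  obtain ⟨b, rfl⟩ := h
  rw [mul_comm, map_mul, Module.End.mul_apply, map_pow, aeval_X, hv, map_zero]

lemma key_nil [FiniteDimensional K V] (hs : f.IsSymm) (h2 : (2 : K) ≠ 0) (h : SkewOn f C U)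
    (hU : Nd f U) (hU0 : U ≠ ⊥) {n : ℕ} (hn : ∀ x ∈ U, (C ^ n) x = 0) : Key f C U := by
  classical
  have hex : ∃ k, ∀ x ∈ U, (C ^ k) x = 0 := ⟨n, hn⟩
  obtain ⟨x0, hx0, hx00⟩ := Submodule.exists_mem_ne_zero_of_ne_bot hU0
  obtain ⟨e, he⟩ : ∃ e, Nat.find hex = e + 1 := by
    apply Nat.exists_eq_succ_of_ne_zero
    intro h0
    have := Nat.find_spec hex x0 hx0
    rw [h0] at this
    exact hx00 (by simpa using this)
  have hz : ∀ x ∈ U, (C ^ (e+1)) x = 0 := he ▸ Nat.find_spec hex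
  have hnz := Nat.find_min hex (m := e) (by omega)
  push Not at hnz
  obtain ⟨u, hu, hue⟩ := hnz
  obtain ⟨y, hy, huy⟩ : ∃ y ∈ U, f ((C ^ e) u) y ≠ 0 := by
    by_contra! hc
    exact hue (hU _ (pow_inv h.inv e u hu) hc)
  have hrad : ∀ (W : Submodule K V), W ≤ U → (∀ x ∈ W, C x ∈ W) → ∀ w ∈ W,
      (∀ y ∈ W, f w y = 0) → ∀ v ∈ W, ∀ k, f ((C ^ k) w) v = 0 := by
    intro W hWU hW w hw hwy v hv k
    rw [h.pow k w (hWU hw) v (hWU hv), hwy _ (pow_inv hW k v hv), mul_zero]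
  rcases Nat.even_or_odd e with hev | hodd
  · obtain ⟨v, hv, hvv⟩ := polar h2 (T := C ^ e) (U := U) (fun x hx y hy => by
      rw [h.pow e x hx y hy, hev.neg_one_pow, one_mul, hs.eq]) hu hy huy
    have hg := good_cyc hs h2 h hv
    have hle : Ev C v ⊔ Od C v ≤ U := sup_le (Ev_le h hv) (Od_le h hv)
    have hvm : v ∈ Ev C v ⊔ Od C v := Submodule.mem_sup_left (self_mem_Ev v)
    refine ⟨_, _, _, ?_, hle, ?_, hg⟩
    · intro h0
      rw [h0, Submodule.mem_bot] at hvm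
      rw [hvm] at hvv
      simp at hvv
    · intro w hw hwy
      have hr := hrad _ hle hg.inv w hw hwy v hvm
      obtain ⟨a, ha, b, hb, rfl⟩ := Submodule.mem_sup.1 hw
      obtain ⟨p, rfl⟩ := Ev_poly ha
      obtain ⟨q, rfl⟩ := Od_poly hb
      rw [← LinearMap.add_apply, ← map_add] at hr ⊢
      exact aeval_dvd_zero (hz v hv) (L1 C (f.flip v) (hz v hv) hvv (p + q) hr)
  · have halt : ∀ v ∈ U, f ((C ^ e) v) v = 0 := by
      intro v hv
      have h1 := h.pow e v hv v hv
      rw [hodd.neg_one_pow, hs.eq v] at h1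
      have : (2 : K) * f ((C ^ e) v) v = 0 := by linear_combination h1
      exact (mul_eq_zero.1 this).resolve_left h2
    obtain ⟨v, hv, huv0, huv⟩ : ∃ v ∈ U, (∀ m ∈ Ev C u, f m v = 0) ∧ f ((C ^ e) u) v ≠ 0 := by
      by_contra! hc
      have hm := mem_of_double hs hU (Ev_le h hu) (pow_inv h.inv e u hu) hc
      obtain ⟨q, hq⟩ := hm
      have hd := L1 C (f.flip y) (hz u hu) huy (X ^ e - q.comp (X ^ 2)) (fun k => by
        have : aeval C (X ^ e - q.comp (X ^ 2)) u = 0 := by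
          rw [map_sub, LinearMap.sub_apply, aeval_comp]
          simp [hq]
        rw [this]; simp)
      have hc := X_pow_dvd_iff.1 hd e (by omega)
      rw [coeff_sub, coeff_X_pow_self, ← expand_eq_comp_X_pow, coeff_expand (by norm_num),
        if_neg (by rw [← even_iff_two_dvd]; exact Nat.not_even_iff_odd.2 hodd)] at hc
      simp at hc
    have huv' : f ((C ^ e) v) u ≠ 0 := by
      rw [h.pow e v hv u hu, hodd.neg_one_pow, hs.eq v]
      simpa using huv
    have o1 : ∀ a ∈ Ev C u, ∀ b ∈ Ev C v, f a b = 0 := by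
      rintro _ ⟨a, rfl⟩ _ ⟨b, rfl⟩
      rw [← aeval_adj h.sq_inv h.sq_adj b _ (aeval_inv h.sq_inv a u hu) v hv,
        ← Module.End.mul_apply, ← map_mul]
      exact huv0 _ ⟨_, rfl⟩
    have o2 : ∀ a ∈ Od C v, ∀ b ∈ Od C u, f a b = 0 := by
      rintro _ ⟨a, ha, rfl⟩ b hb
      rw [h.skew _ (Ev_le h hv ha) _ (Od_le h hu hb), hs.eq, o1 _ (Od_Ev b hb) _ ha, neg_zero]
    have hg : Good f C ((Ev C u ⊔ Od C v) ⊔ (Od C u ⊔ Ev C v)) (Ev C u ⊔ Od C v)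
        (Od C u ⊔ Ev C v) := by
      refine ⟨rfl, ?_, ?_, ?_⟩
      · intro p hp q hq
        obtain ⟨a, ha, b, hb, rfl⟩ := Submodule.mem_sup.1 hp
        obtain ⟨c, hc, d, hd, rfl⟩ := Submodule.mem_sup.1 hq
        simp only [map_add, LinearMap.add_apply, Ev_Od_orth hs h2 h hu a ha c hc, o1 a ha d hd,
          o2 b hb c hc, hs.eq b d, Ev_Od_orth hs h2 h hv d hd b hb, add_zero]
      · intro p hp
        obtain ⟨a, ha, b, hb, rfl⟩ := Submodule.mem_sup.1 hp
        rw [map_add]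
        exact add_mem (Submodule.mem_sup_left (Ev_Od a ha)) (Submodule.mem_sup_right (Od_Ev b hb))
      · intro p hp
        obtain ⟨a, ha, b, hb, rfl⟩ := Submodule.mem_sup.1 hp
        rw [map_add]
        exact add_mem (Submodule.mem_sup_left (Od_Ev a ha)) (Submodule.mem_sup_right (Ev_Od b hb))
    have hle : (Ev C u ⊔ Od C v) ⊔ (Od C u ⊔ Ev C v) ≤ U :=
      sup_le (sup_le (Ev_le h hu) (Od_le h hv)) (sup_le (Od_le h hu) (Ev_le h hv))
    have hum : u ∈ (Ev C u ⊔ Od C v) ⊔ (Od C u ⊔ Ev C v) :=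
      Submodule.mem_sup_left (Submodule.mem_sup_left (self_mem_Ev u))
    have hvm : v ∈ (Ev C u ⊔ Od C v) ⊔ (Od C u ⊔ Ev C v) :=
      Submodule.mem_sup_right (Submodule.mem_sup_right (self_mem_Ev v))
    refine ⟨_, _, _, ?_, hle, ?_, hg⟩
    · intro h0
      rw [h0, Submodule.mem_bot] at hum
      rw [hum] at hue
      simp at hue
    · intro w hw hwy
      have hru := hrad _ hle hg.inv w hw hwy u hum
      have hrv := hrad _ hle hg.inv w hw hwy v hvm
      obtain ⟨p, hp, q, hq, rfl⟩ := Submodule.mem_sup.1 hw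
      obtain ⟨a, ha, b, hb, rfl⟩ := Submodule.mem_sup.1 hp
      obtain ⟨c, hc, d, hd, rfl⟩ := Submodule.mem_sup.1 hq
      obtain ⟨a, rfl⟩ := Ev_poly ha
      obtain ⟨b, rfl⟩ := Od_poly hb
      obtain ⟨c, rfl⟩ := Od_poly hc
      obtain ⟨d, rfl⟩ := Ev_poly hd
      have e1 : aeval C a u + aeval C b v + (aeval C c u + aeval C d v)
          = aeval C (a + c) u + aeval C (b + d) v := by
        simp only [map_add, LinearMap.add_apply]; abel
      rw [e1] at hru hrv ⊢
      obtain ⟨d1, d2⟩ := L2 C (f.flip v) (f.flip u) (hz u hu) (hz v hv) huv (halt v hv)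
        (halt u hu) huv' _ _ hrv hru
      rw [aeval_dvd_zero (hz u hu) d1, aeval_dvd_zero (hz v hv) d2, add_zero]

lemma key_all [FiniteDimensional K V] (hs : f.IsSymm) (h2 : (2 : K) ≠ 0) (h : SkewOn f C U)
    (hU : Nd f U) (hU0 : U ≠ ⊥) : Key f C U := by
  set n := finrank K V with hn
  have hfit := fitting h.inv
  rw [← hn] at hfit
  by_cases h0 : U ⊓ LinearMap.ker (C ^ n) = ⊥
  · refine key_inv hs h2 h hU hU0 (fun x hx hx0 => ?_)
    have : x ∈ U ⊓ LinearMap.ker (C ^ n) := ⟨hx, ker_stab C (m := 1) (by simpa using hx0)⟩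
    rw [h0] at this
    simpa using this
  · have hnd : Nd f (U ⊓ LinearMap.ker (C ^ n)) := by
      refine nd_left (B := U.map (C ^ n)) ?_ (by rw [hfit]; exact hU)
      rintro a ⟨ha, ha'⟩ _ ⟨b, hb, rfl⟩
      have := h.pow n b hb a ha
      rw [LinearMap.mem_ker.1 ha'] at this
      rw [hs.eq, this]; simp
    have hinv : ∀ x ∈ U ⊓ LinearMap.ker (C ^ n), C x ∈ U ⊓ LinearMap.ker (C ^ n) := by
      rintro x ⟨hx, hx'⟩
      refine ⟨h.inv x hx, ker_stab C (m := n) ?_⟩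
      rw [← Module.End.mul_apply, ← pow_succ, pow_succ', Module.End.mul_apply,
        LinearMap.mem_ker.1 hx', map_zero]
    obtain ⟨W, P, Q, hW, hWU, r⟩ := key_nil hs h2 (h.mono inf_le_left hinv) hnd h0
      (n := n) (fun x hx => hx.2)
    exact ⟨W, P, Q, hW, hWU.trans inf_le_left, r⟩

lemma T1C [FiniteDimensional K V] (hs : f.IsSymm) (h2 : (2 : K) ≠ 0) (n : ℕ) :
    ∀ U : Submodule K V, finrank K U = n → SkewOn f C U → Nd f U → ∃ P Q, Good f C U P Q := by
  induction n using Nat.strong_induction_on with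
  | _ n ih =>
    intro U hn h hU
    by_cases hU0 : U = ⊥
    · subst hU0
      refine ⟨⊥, ⊥, by simp, ?_, ?_, ?_⟩ <;> simp
    obtain ⟨W, P, Q, hW, hWU, hWn, hg⟩ := key_all hs h2 h hU hU0
    have hsup := nd_sup_eq hs hWn hWU
    set U' := U ⊓ f.orthogonal W with hU'
    have hor : ∀ a ∈ W, ∀ b ∈ U', f a b = 0 := fun a ha b hb =>
      (LinearMap.BilinForm.mem_orthogonal_iff.1 hb.2) a ha
    have hinv : ∀ x ∈ U', C x ∈ U' := by
      intro x hx
      refine ⟨h.inv x hx.1, LinearMap.BilinForm.mem_orthogonal_iff.2 (fun w hw => ?_)⟩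
      have := h.skew w (hWU hw) x hx.1
      rw [hor _ (hg.inv w hw) x hx] at this
      change f w (C x) = 0
      linear_combination this
    have hlt : finrank K U' < n := by
      rw [← hn]
      refine Submodule.finrank_lt_finrank_of_lt (lt_of_le_of_ne inf_le_left ?_)
      intro he
      apply hW
      rw [eq_bot_iff]
      intro w hw
      exact hWn w hw (fun y hy => hor w hw y (he.symm ▸ hWU hy))
    obtain ⟨P', Q', hg'⟩ := ih _ hlt U' rfl (h.mono inf_le_left hinv)
      (nd_right hs hor (by rw [hsup]; exact hU))
    refine ⟨P ⊔ P', Q ⊔ Q', ?_, ?_, ?_, ?_⟩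
    · rw [sup_sup_sup_comm, hg.1, hg'.1, hsup]
    · intro p hp q hq
      obtain ⟨a, ha, b, hb, rfl⟩ := Submodule.mem_sup.1 hp
      obtain ⟨c, hc, d, hd, rfl⟩ := Submodule.mem_sup.1 hq
      have haW : a ∈ W := hg.1 ▸ Submodule.mem_sup_left ha
      have hcW : c ∈ W := hg.1 ▸ Submodule.mem_sup_right hc
      have hbW : b ∈ U' := hg'.1 ▸ Submodule.mem_sup_left hb
      have hdW : d ∈ U' := hg'.1 ▸ Submodule.mem_sup_right hd
      simp only [map_add, LinearMap.add_apply, hg.2.1 a ha c hc, hg'.2.1 b hb d hd,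
        hor a haW d hdW, hs.eq b c, hor c hcW b hbW, add_zero]
    · intro p hp
      obtain ⟨a, ha, b, hb, rfl⟩ := Submodule.mem_sup.1 hp
      rw [map_add]
      exact add_mem (Submodule.mem_sup_left (hg.2.2.1 a ha))
        (Submodule.mem_sup_right (hg'.2.2.1 b hb))
    · intro p hp
      obtain ⟨a, ha, b, hb, rfl⟩ := Submodule.mem_sup.1 hp
      rw [map_add]
      exact add_mem (Submodule.mem_sup_left (hg.2.2.2 a ha))
        (Submodule.mem_sup_right (hg'.2.2.2 b hb))

end


section

variable {f : LinearMap.BilinForm K V} {U : Submodule K V}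

def GoodI (f : LinearMap.BilinForm K V) (φ : V ≃ₗ[K] V) (W P Q : Submodule K V) : Prop :=
  P ⊔ Q = W ∧ (∀ p ∈ P, ∀ q ∈ Q, f p q = 0) ∧
  (∀ p ∈ P, φ p + φ.symm p ∈ P ∧ φ p - φ.symm p ∈ Q) ∧
  (∀ q ∈ Q, φ q + φ.symm q ∈ Q ∧ φ q - φ.symm q ∈ P)

lemma GoodI.swap (hs : f.IsSymm) {φ : V ≃ₗ[K] V} {W P Q : Submodule K V} (h : GoodI f φ W P Q) :
    GoodI f φ W Q P :=
  ⟨by rw [sup_comm]; exact h.1, fun p hp q hq => by rw [hs.eq]; exact h.2.1 q hq p hp,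
    h.2.2.2, h.2.2.1⟩

lemma GoodI.sup (hs : f.IsSymm) {φ : V ≃ₗ[K] V} {W P Q W' P' Q' : Submodule K V}
    (hg : GoodI f φ W P Q) (hg' : GoodI f φ W' P' Q') (hor : ∀ a ∈ W, ∀ b ∈ W', f a b = 0) :
    GoodI f φ (W ⊔ W') (P ⊔ P') (Q ⊔ Q') := by
  refine ⟨?_, ?_, ?_, ?_⟩
  · rw [sup_sup_sup_comm, hg.1, hg'.1]
  · intro p hp q hq
    obtain ⟨a, ha, b, hb, rfl⟩ := Submodule.mem_sup.1 hp
    obtain ⟨c, hc, d, hd, rfl⟩ := Submodule.mem_sup.1 hq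
    have haW : a ∈ W := hg.1 ▸ Submodule.mem_sup_left ha
    have hcW : c ∈ W := hg.1 ▸ Submodule.mem_sup_right hc
    have hbW : b ∈ W' := hg'.1 ▸ Submodule.mem_sup_left hb
    have hdW : d ∈ W' := hg'.1 ▸ Submodule.mem_sup_right hd
    simp only [map_add, LinearMap.add_apply, hg.2.1 a ha c hc, hg'.2.1 b hb d hd,
      hor a haW d hdW, hs.eq b c, hor c hcW b hbW, add_zero]
  · intro p hp
    obtain ⟨a, ha, b, hb, rfl⟩ := Submodule.mem_sup.1 hp
    rw [map_add, map_add, add_add_add_comm, add_sub_add_comm]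
    exact ⟨add_mem (Submodule.mem_sup_left (hg.2.2.1 a ha).1)
        (Submodule.mem_sup_right (hg'.2.2.1 b hb).1),
      add_mem (Submodule.mem_sup_left (hg.2.2.1 a ha).2)
        (Submodule.mem_sup_right (hg'.2.2.1 b hb).2)⟩
  · intro p hp
    obtain ⟨a, ha, b, hb, rfl⟩ := Submodule.mem_sup.1 hp
    rw [map_add, map_add, add_add_add_comm, add_sub_add_comm]
    exact ⟨add_mem (Submodule.mem_sup_left (hg.2.2.2 a ha).1)
        (Submodule.mem_sup_right (hg'.2.2.2 b hb).1),
      add_mem (Submodule.mem_sup_left (hg.2.2.2 a ha).2)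
        (Submodule.mem_sup_right (hg'.2.2.2 b hb).2)⟩

lemma cay_aux [FiniteDimensional K V] (h2 : (2 : K) ≠ 0) (φ : V ≃ₗ[K] V) {C : Module.End K V}
    (hC : ∀ x ∈ U, C x ∈ U)
    (hφC : ∀ x ∈ U, φ (x - C x) = x + C x) {P Q : Submodule K V} (hP : P ≤ U)
    (hPQ : ∀ p ∈ P, C p ∈ Q) (hQP : ∀ p ∈ Q, C p ∈ P) :
    ∀ p ∈ P, φ p + φ.symm p ∈ P ∧ φ p - φ.symm p ∈ Q := by
  have hi : ∀ x ∈ U, x - C x = 0 → x = 0 := by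
    intro x hx h
    have h1 := hφC x hx
    rw [h, map_zero] at h1
    have h3 : (2 : K) • x = (x - C x) + (x + C x) := by rw [two_smul]; abel
    rw [h, ← h1, add_zero] at h3
    exact (smul_eq_zero.1 h3).resolve_left h2
  have hi' : ∀ x ∈ U, x + C x = 0 → x = 0 := by
    intro x hx h
    have h1 := hφC x hx
    have h3 : x - C x = 0 := by
      rw [h] at h1; exact (LinearEquiv.map_eq_zero_iff φ).1 h1
    exact hi x hx h3
  intro p hp
  obtain ⟨z, hz, rfl⟩ := surj_of_inj (T := 1 - C * C) (U := P)
    (fun x hx => sub_mem hx (hQP _ (hPQ x hx))) (by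
      intro x hx h
      have hxU := hP hx
      have h' : (x + C x) - C (x + C x) = 0 := by
        rw [map_add]
        simp only [LinearMap.sub_apply, Module.End.one_apply, Module.End.mul_apply] at h
        rw [← h]; abel
      exact hi' x hxU (hi _ (add_mem hxU (hC x hxU)) h')) p hp
  have hzU := hP hz
  have e1 : φ ((1 - C * C) z) = z + (2 : K) • C z + C (C z) := by
    have := hφC (z + C z) (add_mem hzU (hC z hzU))
    have e : (1 - C * C) z = z + C z - C (z + C z) := by
      simp only [LinearMap.sub_apply, Module.End.one_apply, Module.End.mul_apply, map_add]; abel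
    rw [e, this, map_add, two_smul]; abel
  have e2 : φ.symm ((1 - C * C) z) = z - (2 : K) • C z + C (C z) := by
    rw [LinearEquiv.symm_apply_eq]
    have := hφC (z - C z) (sub_mem hzU (hC z hzU))
    have e : z - (2 : K) • C z + C (C z) = z - C z - C (z - C z) := by
      rw [map_sub, two_smul]; abel
    rw [e, this]
    simp only [LinearMap.sub_apply, Module.End.one_apply, Module.End.mul_apply, map_sub]; abel
  rw [e1, e2]
  constructor
  · have : z + (2 : K) • C z + C (C z) + (z - (2 : K) • C z + C (C z))
      = (2 : K) • (z + C (C z)) := by simp only [two_smul]; abel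
    rw [this]
    exact P.smul_mem _ (add_mem hz (hQP _ (hPQ z hz)))
  · have : z + (2 : K) • C z + C (C z) - (z - (2 : K) • C z + C (C z))
      = (4 : K) • C z := by
        have h4 : (4 : K) = 2 + 2 := by norm_num
        rw [h4, add_smul]; abel
    rw [this]
    exact Q.smul_mem _ (hPQ z hz)

lemma cay [FiniteDimensional K V] (hs : f.IsSymm) (h2 : (2 : K) ≠ 0) (φ : V ≃ₗ[K] V)
    (hφ : ∀ x y, f (φ x) (φ y) = f x y) (hU : Nd f U) (hinv : ∀ x ∈ U, φ x ∈ U)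
    (hi : ∀ x ∈ U, φ x + x = 0 → x = 0) : ∃ P Q, GoodI f φ U P Q := by
  set T : Module.End K V := (φ : V →ₗ[K] V) + 1 with hT
  have hTa : ∀ x, T x = φ x + x := fun x => rfl
  obtain ⟨g, hg⟩ := LinearMap.exists_leftInverse_of_injective (T ∘ₗ U.subtype) (by
    rw [eq_bot_iff]
    rintro ⟨x, hx⟩ h
    exact Subtype.ext (hi x hx h))
  have hg' : ∀ x (hx : x ∈ U), ((g (φ x + x) : U) : V) = x := by
    intro x hx
    have := LinearMap.congr_fun hg ⟨x, hx⟩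
    exact congrArg Subtype.val this
  set C : Module.End K V := ((φ : V →ₗ[K] V) - 1) ∘ₗ U.subtype ∘ₗ g with hC
  have hCa : ∀ x ∈ U, C (φ x + x) = φ x - x := by
    intro x hx
    have : C (φ x + x) = φ ((g (φ x + x) : U) : V) - ((g (φ x + x) : U) : V) := rfl
    rw [this, hg' x hx]
  have hsurj : ∀ y ∈ U, ∃ x ∈ U, φ x + x = y :=
    surj_of_inj (T := T) (fun x hx => add_mem (hinv x hx) hx) hi
  have hCinv : ∀ x ∈ U, C x ∈ U := by
    intro y hy
    obtain ⟨x, hx, rfl⟩ := hsurj y hy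
    rw [hCa x hx]
    exact sub_mem (hinv x hx) hx
  have hsk : SkewOn f C U := by
    refine ⟨hCinv, ?_⟩
    intro x0 hx0 y0 hy0
    obtain ⟨x, hx, rfl⟩ := hsurj x0 hx0
    obtain ⟨y, hy, rfl⟩ := hsurj y0 hy0
    rw [hCa x hx, hCa y hy]
    simp only [map_add, map_sub, LinearMap.add_apply, LinearMap.sub_apply, hφ]
    ring
  have hφC : ∀ x ∈ U, φ (x - C x) = x + C x := by
    intro x0 hx0
    obtain ⟨x, hx, rfl⟩ := hsurj x0 hx0
    rw [hCa x hx]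
    have : φ x + x - (φ x - x) = x + x := by abel
    rw [this, map_add]; abel
  obtain ⟨P, Q, h⟩ := T1C (C := C) hs h2 _ U rfl hsk hU
  have hP : P ≤ U := h.1 ▸ le_sup_left
  have hQ : Q ≤ U := h.1 ▸ le_sup_right
  exact ⟨P, Q, h.1, h.2.1, cay_aux h2 φ hCinv hφC hP h.2.2.1 h.2.2.2,
    cay_aux h2 φ hCinv hφC hQ h.2.2.2 h.2.2.1⟩

lemma T1 [FiniteDimensional K V] (hs : f.IsSymm) (h2 : (2 : K) ≠ 0) (φ : V ≃ₗ[K] V)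
    (hφ : ∀ x y, f (φ x) (φ y) = f x y) (hU : Nd f U) (hinv : ∀ x ∈ U, φ x ∈ U) :
    ∃ P Q, GoodI f φ U P Q := by
  set T : Module.End K V := (φ : V →ₗ[K] V) + 1 with hT
  have hTa : ∀ x, T x = φ x + x := fun x => rfl
  have hcom : ∀ k x, φ ((T ^ k) x) = (T ^ k) (φ x) := by
    intro k x
    have h0 : Commute ((φ : V →ₗ[K] V) : Module.End K V) T :=
      (Commute.refl _).add_right (Commute.one_right _)
    have := h0.pow_right k
    exact LinearMap.congr_fun this.eq x
  set n := finrank K V with hn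
  have hTU : ∀ x ∈ U, T x ∈ U := fun x hx => add_mem (hinv x hx) hx
  have hfit := fitting hTU
  rw [← hn] at hfit
  have horth : ∀ k a b, (T ^ k) a = 0 → f a ((T ^ k) b) = 0 := by
    intro k
    induction k with
    | zero => intro a b h; simp at h; simp [h]
    | succ k ih =>
      intro a b h
      rw [pow_succ', Module.End.mul_apply, hTa, map_add, ← hφ a ((T ^ k) b), ← LinearMap.add_apply,
        ← map_add, add_comm a, ← hTa, hcom]
      apply ih
      rw [← Module.End.mul_apply, ← pow_succ]
      exact h
  set A := U ⊓ LinearMap.ker (T ^ n) with hA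
  set B := U.map (T ^ n) with hB
  have hor : ∀ a ∈ A, ∀ b ∈ B, f a b = 0 := by
    rintro a ⟨_, ha⟩ _ ⟨b, _, rfl⟩
    exact horth n a b ha
  have hAn : Nd f A := nd_left hor (by rw [hfit]; exact hU)
  have hBn : Nd f B := nd_right hs hor (by rw [hfit]; exact hU)
  have hAi : ∀ x ∈ A, φ x ∈ A := by
    rintro x ⟨hx, hx'⟩
    refine ⟨hinv x hx, ?_⟩
    change (T ^ n) (φ x) = 0
    rw [← hcom, LinearMap.mem_ker.1 hx', map_zero]
  have hBi : ∀ x ∈ B, φ x ∈ B := by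
    rintro _ ⟨x, hx, rfl⟩
    exact ⟨φ x, hinv x hx, (hcom n x).symm⟩
  obtain ⟨P', Q', hg'⟩ := cay hs h2 φ hφ hBn hBi (by
    rintro _ ⟨x, hx, rfl⟩ h
    rw [← hTa, ← Module.End.mul_apply, ← pow_succ'] at h
    exact ker_stab T h)
  obtain ⟨P, Q, hg⟩ := cay (U := A) hs h2 (φ.trans (LinearEquiv.neg K)) (by
    intro x y; simp [hφ]) hAn (by
    intro x hx; simpa using hAi x hx) (by
    rintro x ⟨hx, hx'⟩ h
    have h1 : φ x = x := by
      have : -φ x + x = 0 := h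
      exact (neg_add_eq_zero.1 this)
    have h3 : ∀ k, (T ^ k) x = (2 : K) ^ k • x := by
      intro k
      induction k with
      | zero => simp
      | succ k ih =>
        rw [pow_succ', Module.End.mul_apply, ih, hTa, map_smul, h1, ← two_smul K, smul_smul,
          pow_succ']
    have h4 : (T ^ n) x = 0 := hx'
    rw [h3] at h4
    exact (smul_eq_zero.1 h4).resolve_left (pow_ne_zero _ h2))
  have hgA : GoodI f φ A P Q := by
    refine ⟨hg.1, hg.2.1, fun p hp => ?_, fun p hp => ?_⟩
    · obtain ⟨a, b⟩ := hg.2.2.1 p hp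
      have e1 : (φ.trans (LinearEquiv.neg K)) p + (φ.trans (LinearEquiv.neg K)).symm p
          = -(φ p + φ.symm p) := by
        change -φ p + φ.symm (-p) = _
        rw [map_neg]; abel
      have e2 : (φ.trans (LinearEquiv.neg K)) p - (φ.trans (LinearEquiv.neg K)).symm p
          = -(φ p - φ.symm p) := by
        change -φ p - φ.symm (-p) = _
        rw [map_neg]; abel
      rw [e1] at a
      rw [e2] at b
      exact ⟨neg_mem_iff.1 a, neg_mem_iff.1 b⟩
    · obtain ⟨a, b⟩ := hg.2.2.2 p hp
      have e1 : (φ.trans (LinearEquiv.neg K)) p + (φ.trans (LinearEquiv.neg K)).symm p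
          = -(φ p + φ.symm p) := by
        change -φ p + φ.symm (-p) = _
        rw [map_neg]; abel
      have e2 : (φ.trans (LinearEquiv.neg K)) p - (φ.trans (LinearEquiv.neg K)).symm p
          = -(φ p - φ.symm p) := by
        change -φ p - φ.symm (-p) = _
        rw [map_neg]; abel
      rw [e1] at a
      rw [e2] at b
      exact ⟨neg_mem_iff.1 a, neg_mem_iff.1 b⟩
  exact ⟨_, _, hfit ▸ GoodI.sup hs hgA hg' hor⟩

lemma det_refl [FiniteDimensional K V] {P Q : Submodule K V} (h : IsCompl P Q)
    (σ : V →ₗ[K] V) (h1 : ∀ x ∈ P, σ x = x) (h2 : ∀ x ∈ Q, σ x = -x) :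
    LinearMap.det σ = (-1) ^ finrank K Q := by
  set e := Submodule.prodEquivOfIsCompl P Q h with he
  have : σ = e.toLinearMap ∘ₗ (LinearMap.prodMap LinearMap.id (-LinearMap.id)) ∘ₗ
      e.symm.toLinearMap := by
    ext x
    obtain ⟨⟨p, q⟩, rfl⟩ := e.surjective x
    simp [he, h1 p p.2, h2 q q.2]
  rw [this, LinearMap.det_conj, LinearMap.det_prodMap, LinearMap.det_id, one_mul]
  have h3 : (-LinearMap.id : Q →ₗ[K] Q) = (-1 : K) • LinearMap.id := (neg_one_smul K _).symm
  rw [h3, LinearMap.det_smul, LinearMap.det_id, mul_one]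

lemma biref_of_good [FiniteDimensional K V] (hs : f.IsSymm) (h2 : (2 : K) ≠ 0)
    (hf : Nd f ⊤) (φ : V ≃ₗ[K] V)
    (hφ : φ ∈ specialOrthGroup f) {P Q : Submodule K V} (hg : GoodI f φ ⊤ P Q)
    (hQ : Even (finrank K Q)) : IsBireflectionalIn (specialOrthGroup f) φ := by
  have hc : IsCompl P Q := by
    refine ⟨?_, codisjoint_iff.2 hg.1⟩
    rw [disjoint_iff, eq_bot_iff]
    rintro x ⟨hx, hx'⟩
    refine hf x trivial (fun y _ => ?_)
    have hy : y ∈ P ⊔ Q := hg.1 ▸ trivial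
    obtain ⟨p, hp, q, hq, rfl⟩ := Submodule.mem_sup.1 hy
    rw [map_add, hg.2.1 x hx q hq, hs.eq, hg.2.1 p hp x hx', add_zero]
  set e := Submodule.prodEquivOfIsCompl P Q hc with he
  set σ : V →ₗ[K] V := e.toLinearMap ∘ₗ (LinearMap.prodMap LinearMap.id (-LinearMap.id)) ∘ₗ
      e.symm.toLinearMap with hσ
  have s1 : ∀ x ∈ P, σ x = x := by
    intro x hx
    have : e.symm x = (⟨x, hx⟩, 0) := by rw [LinearEquiv.symm_apply_eq]; simp [he]
    change e (LinearMap.prodMap LinearMap.id (-LinearMap.id) (e.symm x)) = x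
    rw [this]; simp [he]
  have s2 : ∀ x ∈ Q, σ x = -x := by
    intro x hx
    have : e.symm x = (0, ⟨x, hx⟩) := by rw [LinearEquiv.symm_apply_eq]; simp [he]
    change e (LinearMap.prodMap LinearMap.id (-LinearMap.id) (e.symm x)) = -x
    rw [this]; simp [he]
  have hdec : ∀ y : V, ∃ p ∈ P, ∃ q ∈ Q, p + q = y := fun y =>
    Submodule.mem_sup.1 (hg.1 ▸ trivial : y ∈ P ⊔ Q)
  have ss : ∀ x, σ (σ x) = x := by
    intro x
    obtain ⟨p, hp, q, hq, rfl⟩ := hdec x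
    rw [map_add, map_add, s1 p hp, s2 q hq, s1 p hp, map_neg, s2 q hq, neg_neg]
  have sf : ∀ x y, f (σ x) (σ y) = f x y := by
    intro x y
    obtain ⟨p, hp, q, hq, rfl⟩ := hdec x
    obtain ⟨p', hp', q', hq', rfl⟩ := hdec y
    rw [map_add σ, map_add σ, s1 p hp, s2 q hq, s1 p' hp', s2 q' hq']
    simp only [map_add, map_neg, LinearMap.add_apply, LinearMap.neg_apply, hg.2.1 p hp q' hq',
      hs.eq q p', hg.2.1 p' hp' q hq]
    ring
  have sφ : ∀ x, σ (φ (σ (φ x))) = x := by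
    have key : ∀ x, σ (φ x) = φ.symm (σ x) := by
      intro x
      have two_inj : ∀ a b : V, (2 : K) • a = (2 : K) • b → a = b := fun a b h =>
        smul_right_injective V h2 h
      obtain ⟨p, hp, q, hq, rfl⟩ := hdec x
      have kp : σ (φ p) = φ.symm p := by
        apply two_inj
        obtain ⟨a, b⟩ := hg.2.2.1 p hp
        have e1 : (2 : K) • φ p = (φ p + φ.symm p) + (φ p - φ.symm p) := by rw [two_smul]; abel
        rw [← map_smul, e1, map_add, s1 _ a, s2 _ b, two_smul]; abel
      have kq : σ (φ q) = -φ.symm q := by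
        apply two_inj
        obtain ⟨a, b⟩ := hg.2.2.2 q hq
        have e1 : (2 : K) • φ q = (φ q + φ.symm q) + (φ q - φ.symm q) := by rw [two_smul]; abel
        rw [← map_smul, e1, map_add, s2 _ a, s1 _ b, two_smul]; abel
      rw [map_add, map_add, map_add, kp, kq, s1 p hp, s2 q hq, map_add, map_neg]
    intro x
    rw [key (σ (φ x)), ss, LinearEquiv.symm_apply_apply]
  have sdet : LinearMap.det σ = 1 := by
    rw [det_refl hc σ s1 s2, hQ.neg_one_pow]
  let σ' : V ≃ₗ[K] V := LinearEquiv.ofLinearMap σ σ (LinearMap.ext ss) (LinearMap.ext ss)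
  have hσ' : σ' ∈ specialOrthGroup f := ⟨sf, sdet⟩
  have hσσ : σ' ^ 2 = 1 := by
    rw [pow_two]; ext x; exact ss x
  refine ⟨σ', σ' * φ, hσ', mul_mem hσ' hφ, hσσ, ?_, ?_⟩
  · rw [pow_two]; ext x; exact sφ x
  · rw [← mul_assoc, ← pow_two, hσσ, one_mul]

lemma main_if [FiniteDimensional K V] (hs : f.IsSymm) (h2 : (2 : K) ≠ 0)
    (hf : Nd f ⊤) (φ : V ≃ₗ[K] V) (hφ : φ ∈ specialOrthGroup f)
    (hU : Nd f U) (hinv : ∀ x ∈ U, φ x ∈ U) (hodd : Odd (finrank K U)) :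
    IsBireflectionalIn (specialOrthGroup f) φ := by
  have hsup := nd_sup_eq hs hU (le_top : U ≤ ⊤)
  rw [top_inf_eq] at hsup
  have hor : ∀ a ∈ U, ∀ b ∈ f.orthogonal U, f a b = 0 := fun a ha b hb =>
    (LinearMap.BilinForm.mem_orthogonal_iff.1 hb) a ha
  have hsurj := surj_of_inj (T := (φ : V →ₗ[K] V)) hinv (fun x _ h => by simpa using h)
  have hinv' : ∀ x ∈ f.orthogonal U, φ x ∈ f.orthogonal U := by
    intro x hx
    refine LinearMap.BilinForm.mem_orthogonal_iff.2 (fun w0 hw0 => ?_)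
    obtain ⟨w, hw, rfl⟩ := hsurj w0 hw0
    change f (φ w) (φ x) = 0
    rw [hφ.1]
    exact hor w hw x hx
  obtain ⟨P, Q, hg⟩ := T1 hs h2 φ hφ.1 hU hinv
  obtain ⟨P', Q', hg'⟩ := T1 hs h2 φ hφ.1 (nd_right hs hor (by rw [hsup]; exact hf)) hinv'
  have hd : ∀ {A B : Submodule K V}, A ≤ U → B ≤ f.orthogonal U →
      finrank K (A ⊔ B : Submodule K V) = finrank K A + finrank K B := by
    intro A B hA hB
    have := Submodule.finrank_sup_add_finrank_inf_eq A B
    have h0 : A ⊓ B = ⊥ := by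
      rw [eq_bot_iff]
      rintro x ⟨hx, hx'⟩
      exact hU x (hA hx) (fun y hy => by rw [hs.eq]; exact hor y hy x (hB hx'))
    rw [h0, finrank_bot] at this
    omega
  have hPQ : finrank K P + finrank K Q = finrank K U := by
    have := Submodule.finrank_sup_add_finrank_inf_eq P Q
    have h0 : P ⊓ Q = ⊥ := by
      rw [eq_bot_iff]
      rintro x ⟨hx, hx'⟩
      refine hU x (hg.1 ▸ Submodule.mem_sup_left hx) (fun y hy => ?_)
      rw [← hg.1] at hy
      obtain ⟨p, hp, q, hq, rfl⟩ := Submodule.mem_sup.1 hy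
      rw [map_add, hg.2.1 x hx q hq, hs.eq, hg.2.1 p hp x hx', add_zero]
    rw [h0, finrank_bot, hg.1] at this
    omega
  have hQ' : Q' ≤ f.orthogonal U := hg'.1 ▸ le_sup_right
  have hP : P ≤ U := hg.1 ▸ le_sup_left
  have hQ : Q ≤ U := hg.1 ▸ le_sup_right
  have g1 := GoodI.sup hs hg hg' hor
  have g2 := GoodI.sup hs (hg.swap hs) hg' hor
  rw [hsup] at g1 g2
  by_cases hev : Even (finrank K Q + finrank K Q')
  · exact biref_of_good hs h2 hf φ hφ g1 (by rw [hd hQ hQ']; exact hev)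
  · refine biref_of_good hs h2 hf φ hφ g2 ?_
    rw [hd hP hQ']
    rw [← hPQ] at hodd
    grind

end


section

variable {f : LinearMap.BilinForm K V}

lemma jordan_nd [FiniteDimensional K V] (φ : V ≃ₗ[K] V)
    (hφ : ∀ x y, f (φ x) (φ y) = f x y) {D : Module.End K V} {ε : K}
    (hD : ∀ x, D x = φ x - ε • x) {e : ℕ} {v : V} (hd : (D ^ (e+1)) v = 0)
    (hv : f ((D ^ e) v) v ≠ 0) :
    ∃ W : Submodule K V, Nd f W ∧ (∀ x ∈ W, φ x ∈ W) ∧ finrank K W = e + 1 := by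
  set b : Fin (e+1) → V := fun i => (D ^ (i : ℕ)) v with hb
  set W := Submodule.span K (Set.range b) with hW
  have hpow : ∀ k, (D ^ k) v ∈ W := by
    intro k
    by_cases hk : k < e + 1
    · exact Submodule.subset_span ⟨⟨k, hk⟩, rfl⟩
    · have : k = (k - (e+1)) + (e+1) := by omega
      rw [this, pow_add, Module.End.mul_apply, hd, map_zero]
      exact W.zero_mem
  have hDW : ∀ x ∈ W, D x ∈ W := by
    intro x hx
    have : W ≤ W.comap D := by
      rw [hW, Submodule.span_le]
      rintro _ ⟨i, rfl⟩
      have := hpow (i + 1)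
      rw [pow_succ', Module.End.mul_apply] at this
      exact this
    exact this hx
  have hφW : ∀ x ∈ W, φ x ∈ W := by
    intro x hx
    have : φ x = D x + ε • x := by rw [hD]; abel
    rw [this]
    exact add_mem (hDW x hx) (W.smul_mem _ hx)
  have hsurj := surj_of_inj (T := (φ : V →ₗ[K] V)) hφW (fun x _ h => by simpa using h)
  have hpoly : ∀ g : Fin (e+1) → K,
      aeval D (∑ i : Fin (e+1), monomial (i : ℕ) (g i)) v = ∑ i, g i • b i := by
    intro g
    rw [map_sum, LinearMap.sum_apply]
    refine Finset.sum_congr rfl (fun i _ => ?_)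
    rw [aeval_monomial]
    simp [hb, Algebra.algebraMap_eq_smul_one]
  have hli : LinearIndependent K b := by
    rw [Fintype.linearIndependent_iff]
    intro g hg i
    have h0 := hpoly g
    rw [hg] at h0
    have := L1 D (f.flip v) hd (by simpa using hv) _ (fun k => by rw [h0]; simp)
    rw [X_pow_dvd_iff] at this
    have := this i i.2
    rw [finsetSum_coeff] at this
    simpa [coeff_monomial, Fin.val_inj] using this
  refine ⟨W, ?_, hφW, ?_⟩
  · intro x hx hxy
    obtain ⟨g, hg⟩ := (Submodule.mem_span_range_iff_exists_fun K).1 hx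
    have hk : ∀ k, ∀ y ∈ W, f ((D ^ k) x) y = 0 := by
      intro k
      induction k with
      | zero => simpa using hxy
      | succ k ih =>
        intro y0 hy0
        obtain ⟨y, hy, rfl⟩ := hsurj y0 hy0
        rw [pow_succ', Module.End.mul_apply, hD, map_sub, LinearMap.sub_apply]
        change f (φ _) (φ y) - _ = _
        rw [hφ, ih y hy, map_smul, LinearMap.smul_apply, ih _ hy0]
        simp
    rw [← hg, ← hpoly] at hk
    have := L1 D (f.flip v) hd (by simpa using hv)
      (∑ i : Fin (e+1), monomial (i : ℕ) (g i)) (fun k => hk k v (by simpa using hpow 0))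
    rw [← hg, ← hpoly]
    obtain ⟨q, hq⟩ := this
    rw [hq, mul_comm, map_mul, Module.End.mul_apply, map_pow, aeval_X, hd, map_zero]
  · rw [hW, finrank_span_eq_card hli, Fintype.card_fin]

lemma jordan_N (φ : V ≃ₗ[K] V) {D N : Module.End K V} {ε : K} (hε : ε * ε = 1)
    (hD : ∀ x, D x = φ x - ε • x) (hN : ∀ x, N x = φ x - φ.symm x) (j : ℕ) :
    ∀ v, (D ^ (j+1)) v = 0 → (N ^ j) v = (2 : K) ^ j • (D ^ j) v := by
  have hc : Commute N D := by
    apply LinearMap.ext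
    intro x
    simp only [Module.End.mul_apply, hD, hN, map_sub, map_smul, LinearEquiv.symm_apply_apply,
      LinearEquiv.apply_symm_apply]
    simp only [smul_sub]; abel
  have hc' : ∀ k x, (D ^ k) (N x) = N ((D ^ k) x) := fun k x =>
    (LinearMap.congr_fun (hc.pow_right k).eq x).symm
  induction j with
  | zero => intro v _; simp
  | succ j ih =>
    intro v hv
    rw [pow_succ, Module.End.mul_apply, ih (N v) (by
      
      rw [hc']
      have hw : D ((D ^ (j+1)) v) = 0 := by rw [← Module.End.mul_apply, ← pow_succ']; exact hv
      rw [hD, sub_eq_zero] at hw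
      have hw' : φ.symm ((D ^ (j+1)) v) = ε • (D ^ (j+1)) v := by
        rw [LinearEquiv.symm_apply_eq, map_smul, hw, smul_smul, hε, one_smul]
      rw [hN, hw, hw', sub_self]), hc', pow_succ, mul_smul]
    congr 1
    set u := (D ^ j) v with hu
    have h1 : D (D u) = 0 := by
      rw [pow_succ', Module.End.mul_apply, pow_succ', Module.End.mul_apply] at hv
      exact hv
    have h3 : (D ^ (j+1)) v = D u := by rw [pow_succ', Module.End.mul_apply]
    rw [h3]
    rw [hD, sub_eq_zero, ← LinearEquiv.eq_symm_apply, hD, map_smul, map_sub, map_smul, smul_sub,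
      smul_smul, hε, one_smul, LinearEquiv.symm_apply_apply] at h1
    rw [hD, hN, two_smul]
    nth_rewrite 2 [h1]
    abel

lemma claim [FiniteDimensional K V] (hs : f.IsSymm) (h2 : (2 : K) ≠ 0) (hf : Nd f ⊤)
    (φ : V ≃ₗ[K] V) (hφ : ∀ x y, f (φ x) (φ y) = f x y) {N : Module.End K V}
    (hN : ∀ x, N x = φ x - φ.symm x)
    (hno : ∀ W : Submodule K V, Nd f W → (∀ x ∈ W, φ x ∈ W) → ¬ Odd (finrank K W))
    {e : ℕ} (he : Even e) {z : V} (hz : N ((N ^ e) z) = 0) :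
    ∃ w, (N ^ (e+1)) w = (N ^ e) z := by
  have hφ' : ∀ x y, f (φ.symm x) y = f x (φ y) := by
    intro x y; rw [← hφ, LinearEquiv.apply_symm_apply]
  have hφ'' : ∀ x y, f (φ x) y = f x (φ.symm y) := by
    intro x y; rw [← hφ x, LinearEquiv.apply_symm_apply]
  have hadj : ∀ k x y, f ((N ^ k) x) y = (-1) ^ k * f x ((N ^ k) y) := by
    intro k
    induction k with
    | zero => intro x y; simp
    | succ k ih =>
      intro x y
      rw [pow_succ', Module.End.mul_apply, hN, map_sub, LinearMap.sub_apply, hφ', hφ'',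
        ← map_sub, ih, ← neg_sub, ← hN, map_neg, map_neg, ← Module.End.mul_apply, ← pow_succ,
        ← pow_succ', pow_succ]
      ring
  change (N ^ e) z ∈ LinearMap.range (N ^ (e+1))
  refine mem_of_double hs hf le_top trivial (fun y _ hy => ?_)
  have hNy : (N ^ (e+1)) y = 0 := by
    refine hf _ trivial (fun w _ => ?_)
    have := hy _ ⟨w, rfl⟩
    rw [hadj, hs.eq, this, mul_zero]
  by_contra hne
  set x := (N ^ e) z with hx
  -- choose the eigenvalue
  obtain ⟨ε, hε, hxε⟩ : ∃ ε : K, ε * ε = 1 ∧ f (x + ε • φ x) y ≠ 0 := by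
    by_contra! hc
    have a1 := hc 1 (by ring)
    have a2 := hc (-1) (by ring)
    simp only [map_add, map_smul, LinearMap.add_apply, LinearMap.smul_apply, smul_eq_mul] at a1 a2
    apply hne
    have : (2 : K) * f x y = 0 := by linear_combination a1 + a2
    exact (mul_eq_zero.1 this).resolve_left h2
  have hε0 : ε ≠ 0 := by rintro rfl; simp at hε
  have h2ε : 2 * ε ≠ 0 := mul_ne_zero h2 hε0
  set x' := x + ε • φ x with hx'
  have hx1 : φ x = φ.symm x := by rw [hN] at hz; exact sub_eq_zero.1 hz
  have hx'φ : φ x' = ε • x' := by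
    rw [hx', map_add, map_smul, smul_add, smul_smul, hε, one_smul]
    nth_rewrite 2 [hx1]
    rw [LinearEquiv.apply_symm_apply, add_comm]
  set F : Module.End K V := (φ : V →ₗ[K] V) with hF
  set D : Module.End K V := F - ε • 1 with hDdef
  set E : Module.End K V := F + ε • 1 with hEdef
  have hD : ∀ x, D x = φ x - ε • x := fun x => rfl
  have hE : ∀ x, E x = φ x + ε • x := fun x => rfl
  have hNF : Commute N F := by
    apply LinearMap.ext
    intro x
    change N (φ x) = φ (N x)
    simp [hN]
  have hNE : Commute N E := hNF.add_right ((Commute.one_right N).smul_right ε)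
  have hFE : Commute F E := (Commute.refl F).add_right ((Commute.one_right F).smul_right ε)
  have hDE : Commute D E :=
    hFE.sub_left ((Commute.one_left E).smul_left ε)
  have hprod : D * E = F * N := by
    apply LinearMap.ext
    intro x
    change D (E x) = φ (N x)
    rw [hD, hE, hN, map_add, map_smul, map_sub, LinearEquiv.apply_symm_apply, smul_add, smul_smul,
      hε, one_smul]
    abel
  have hDE' : ∀ k y, (N ^ k) y = 0 → (D ^ k) ((E ^ k) y) = 0 := by
    intro k y h
    rw [← Module.End.mul_apply, ← hDE.mul_pow, hprod, hNF.symm.mul_pow, Module.End.mul_apply, h,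
      map_zero]
  have hEx : ∀ k, (E ^ k) x' = (2 * ε) ^ k • x' := by
    intro k
    induction k with
    | zero => simp
    | succ k ih =>
      rw [pow_succ', Module.End.mul_apply, ih, map_smul, hE, hx'φ, ← add_smul, smul_smul, ← two_mul,
        pow_succ]
  have hxsymm : φ.symm x' = ε • x' := by
    rw [LinearEquiv.symm_apply_eq, map_smul, hx'φ, smul_smul, hε, one_smul]
  have hfE : ∀ k, f x' ((E ^ k) y) = (2 * ε) ^ k * f x' y := by
    intro k
    induction k with
    | zero => simp
    | succ k ih =>
      rw [pow_succ', Module.End.mul_apply, hE, map_add, map_smul, ← hφ', hxsymm, map_smul,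
        LinearMap.smul_apply, ih]
      simp only [smul_eq_mul]; ring
  set z' := z + ε • φ z with hz'
  have hxz : x' = (N ^ e) z' := by
    rw [hz', map_add, map_smul, hx', hx]
    congr 2
    exact (LinearMap.congr_fun (hNF.pow_left e).eq z).symm
  have hNz' : (N ^ (e+1)) z' = 0 := by
    rw [pow_succ', Module.End.mul_apply, ← hxz, hN, hx'φ, hxsymm, sub_self]
  obtain ⟨v, hv, hv'⟩ := polar (f := f) h2 (U := LinearMap.ker (D ^ (e+1))) (T := N ^ e)
    (by
      intro a _ b _
      rw [hadj, he.neg_one_pow, one_mul, hs.eq])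
    (x := (E ^ (e+1)) z') (y := (E ^ (e+1)) y) (hDE' _ _ hNz') (hDE' _ _ hNy) (by
      rw [← Module.End.mul_apply, (hNE.pow_pow e (e+1)).eq, Module.End.mul_apply, ← hxz, hEx,
        map_smul, LinearMap.smul_apply, hfE]
      exact smul_ne_zero (pow_ne_zero _ h2ε) (mul_ne_zero (pow_ne_zero _ h2ε) hxε))
  have hv1 : (D ^ (e+1)) v = 0 := hv
  rw [jordan_N φ hε hD hN e v hv1, map_smul, LinearMap.smul_apply] at hv'
  obtain ⟨W, hW, hWi, hWd⟩ := jordan_nd φ hφ hD hv1 (right_ne_zero_of_smul hv')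
  exact hno W hW hWi (by rw [hWd]; exact he.add_one)

end


section

variable {f : LinearMap.BilinForm K V}

lemma swap_pow {N : Module.End K V} {A B : Submodule K V} (hA : ∀ x ∈ A, N x ∈ B)
    (hB : ∀ x ∈ B, N x ∈ A) (k : ℕ) :
    (Even k → ∀ x ∈ A, (N ^ k) x ∈ A) ∧ (Odd k → ∀ x ∈ A, (N ^ k) x ∈ B) := by
  induction k with
  | zero => exact ⟨fun _ x hx => by simpa using hx, fun h => by simp at h⟩
  | succ k ih =>
    constructor
    · intro h x hx
      rw [pow_succ', Module.End.mul_apply]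
      exact hB _ (ih.2 (by grind) x hx)
    · intro h x hx
      rw [pow_succ', Module.End.mul_apply]
      exact hA _ (ih.1 (by grind) x hx)

lemma map_pow_succ' (N : Module.End K V) (A : Submodule K V) (k : ℕ) :
    (A.map (N ^ k)).map N = A.map (N ^ (k+1)) := by
  rw [pow_succ', ← Submodule.map_comp]; rfl

lemma rk_odd [FiniteDimensional K V] (hs : f.IsSymm) (hnd : f.Nondegenerate)
    {N : Module.End K V} (hadj : ∀ k x y, f ((N ^ k) x) y = (-1) ^ k * f x ((N ^ k) y))
    {A B : Submodule K V} (hA : ∀ x ∈ A, N x ∈ B) (hB : ∀ x ∈ B, N x ∈ A) (hAB : IsCompl A B)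
    (hor : ∀ a ∈ A, ∀ b ∈ B, f a b = 0) {k : ℕ} (hk : Odd k) :
    finrank K (A.map (N ^ k)) = finrank K (B.map (N ^ k)) := by
  have h1 := rk_add (N ^ k) A
  have h3 := LinearMap.BilinForm.finrank_orthogonal hnd (B.map (N ^ k))
  have hle : finrank K (B.map (N ^ k)) ≤ finrank K V := Submodule.finrank_le _
  have hdim := Submodule.finrank_sup_add_finrank_inf_eq A B
  rw [hAB.sup_eq_top, hAB.inf_eq_bot, finrank_bot, finrank_top] at hdim
  have hMA : B.map (N ^ k) ≤ A := by
    rintro _ ⟨b, hb, rfl⟩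
    exact (swap_pow hB hA k).2 hk b hb
  have e : f.orthogonal (B.map (N ^ k)) = (A ⊓ LinearMap.ker (N ^ k)) ⊔ B := by
    apply le_antisymm
    · intro x hx
      have hx' : x ∈ A ⊔ B := hAB.sup_eq_top ▸ trivial
      obtain ⟨a, ha, b, hb, rfl⟩ := Submodule.mem_sup.1 hx'
      refine Submodule.add_mem_sup ⟨ha, ?_⟩ hb
      change (N ^ k) a = 0
      refine hnd.1 _ (fun y => ?_)
      have hy : y ∈ A ⊔ B := hAB.sup_eq_top ▸ trivial
      obtain ⟨c, hc, d, hd, rfl⟩ := Submodule.mem_sup.1 hy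
      have hb1 : (N ^ k) a ∈ B := (swap_pow hA hB k).2 hk a ha
      have hd1 := (LinearMap.BilinForm.mem_orthogonal_iff.1 hx) _ ⟨d, hd, rfl⟩
      change f _ _ = 0 at hd1
      rw [map_add, hor _ (hMA ⟨d, hd, rfl⟩) b hb, add_zero] at hd1
      rw [map_add, hs.eq, hor c hc _ hb1, zero_add, hadj, hs.eq, hd1, mul_zero]
    · refine sup_le ?_ ?_
      · rintro a ⟨_, ha⟩
        refine LinearMap.BilinForm.mem_orthogonal_iff.2 ?_
        rintro _ ⟨d, hd, rfl⟩
        change f _ _ = 0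
        rw [hadj, LinearMap.mem_ker.1 ha, map_zero, mul_zero]
      · intro b hb
        refine LinearMap.BilinForm.mem_orthogonal_iff.2 ?_
        intro m hm
        exact hor m (hMA hm) b hb
  have h4 := Submodule.finrank_sup_add_finrank_inf_eq (A ⊓ LinearMap.ker (N ^ k)) B
  have h5 : A ⊓ LinearMap.ker (N ^ k) ⊓ B = ⊥ := by
    rw [eq_bot_iff, ← hAB.inf_eq_bot]
    rintro x ⟨⟨hx, _⟩, hx'⟩
    exact ⟨hx, hx'⟩
  rw [h5, finrank_bot, ← e] at h4
  omega

lemma rk_even [FiniteDimensional K V] {N : Module.End K V}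
    {A B : Submodule K V} (hA : ∀ x ∈ A, N x ∈ B) (hB : ∀ x ∈ B, N x ∈ A) (hAB : IsCompl A B)
    {e : ℕ} (he : Even e)
    (hcl : ∀ z, N ((N ^ e) z) = 0 → ∃ w, (N ^ (e+1)) w = (N ^ e) z) :
    finrank K (A.map (N ^ e)) + finrank K (B.map (N ^ (e+2))) =
      finrank K (A.map (N ^ (e+1))) + finrank K (B.map (N ^ (e+1))) := by
  have h1 := rk_add N (A.map (N ^ e))
  have h2 := rk_add N (B.map (N ^ (e+1)))
  rw [map_pow_succ'] at h1 h2
  have h3 : A.map (N ^ e) ⊓ LinearMap.ker N = B.map (N ^ (e+1)) ⊓ LinearMap.ker N := by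
    apply le_antisymm
    · rintro _ ⟨⟨z, hz, rfl⟩, hk⟩
      refine ⟨?_, hk⟩
      obtain ⟨w, hw⟩ := hcl z hk
      have hw' : w ∈ A ⊔ B := hAB.sup_eq_top ▸ trivial
      obtain ⟨a, ha, b, hb, rfl⟩ := Submodule.mem_sup.1 hw'
      refine ⟨b, hb, ?_⟩
      have ha1 : (N ^ (e+1)) a ∈ B := (swap_pow hA hB (e+1)).2 he.add_one a ha
      have hb1 : (N ^ (e+1)) b ∈ A := (swap_pow hB hA (e+1)).2 he.add_one b hb
      have hz1 : (N ^ e) z ∈ A := (swap_pow hA hB e).1 he z hz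
      rw [map_add] at hw
      have h0 : (N ^ (e+1)) a ∈ A ⊓ B := by
        refine ⟨?_, ha1⟩
        rw [← eq_sub_iff_add_eq] at hw
        rw [hw]; exact sub_mem hz1 hb1
      rw [hAB.inf_eq_bot, Submodule.mem_bot] at h0
      rw [← hw, h0, zero_add]
    · rintro _ ⟨⟨b, hb, rfl⟩, hk⟩
      refine ⟨⟨N b, hB b hb, ?_⟩, hk⟩
      rw [← Module.End.mul_apply, ← pow_succ]
  rw [h3] at h1
  have e2 : e + 1 + 1 = e + 2 := rfl
  rw [e2] at h2
  omega

lemma T2 [FiniteDimensional K V] (hs : f.IsSymm) (h2 : (2 : K) ≠ 0) (hnd : f.Nondegenerate)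
    (φ : V ≃ₗ[K] V) (hφ : ∀ x y, f (φ x) (φ y) = f x y)
    (hno : ∀ W : Submodule K V, Nd f W → (∀ x ∈ W, φ x ∈ W) → ¬ Odd (finrank K W))
    {N : Module.End K V} (hN : ∀ x, N x = φ x - φ.symm x)
    {A B : Submodule K V} (hA : ∀ x ∈ A, N x ∈ B) (hB : ∀ x ∈ B, N x ∈ A) (hAB : IsCompl A B)
    (hor : ∀ a ∈ A, ∀ b ∈ B, f a b = 0) : finrank K A = finrank K B := by
  have hf : Nd f ⊤ := fun x _ h => hnd.1 x (fun y => h y trivial)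
  have hφ' : ∀ x y, f (φ.symm x) y = f x (φ y) := by
    intro x y; rw [← hφ, LinearEquiv.apply_symm_apply]
  have hφ'' : ∀ x y, f (φ x) y = f x (φ.symm y) := by
    intro x y; rw [← hφ x, LinearEquiv.apply_symm_apply]
  have hadj : ∀ k x y, f ((N ^ k) x) y = (-1) ^ k * f x ((N ^ k) y) := by
    intro k
    induction k with
    | zero => intro x y; simp
    | succ k ih =>
      intro x y
      rw [pow_succ', Module.End.mul_apply, hN, map_sub, LinearMap.sub_apply, hφ', hφ'',
        ← map_sub, ih, ← neg_sub, ← hN, map_neg, map_neg, ← Module.End.mul_apply, ← pow_succ,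
        ← pow_succ', pow_succ]
      ring
  have hcl : ∀ e, Even e → ∀ z, N ((N ^ e) z) = 0 → ∃ w, (N ^ (e+1)) w = (N ^ e) z :=
    fun e he z hz => claim hs h2 hf φ hφ hN hno he hz
  have hodd : ∀ k, Odd k → finrank K (A.map (N ^ k)) = finrank K (B.map (N ^ k)) :=
    fun k hk => rk_odd hs hnd hadj hA hB hAB hor hk
  have hstep : ∀ i, finrank K (A.map (N ^ (2 * i))) + finrank K B =
      finrank K (B.map (N ^ (2 * i))) + finrank K A := by
    intro i
    induction i with
    | zero =>
      have h0 : ∀ C : Submodule K V, C.map (N ^ (2 * 0)) = C := fun C => Submodule.map_id C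
      rw [h0, h0, add_comm]
    | succ i ih =>
      have e1 := rk_even hA hB hAB (even_two_mul i) (hcl _ (even_two_mul i))
      have e2 := rk_even hB hA hAB.symm (even_two_mul i) (hcl _ (even_two_mul i))
      have e3 : 2 * (i + 1) = 2 * i + 2 := by ring
      rw [e3]
      omega
  have hstab : ∀ C : Submodule K V, finrank K (C.map (N ^ (2 * finrank K V))) =
      finrank K (C.map (N ^ (2 * finrank K V + 1))) := by
    intro C
    have h := rk_add N (C.map (N ^ (2 * finrank K V)))
    have h0 : C.map (N ^ (2 * finrank K V)) ⊓ LinearMap.ker N = ⊥ := by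
      rw [eq_bot_iff]
      rintro _ ⟨⟨x, _, rfl⟩, hk⟩
      change N _ = 0 at hk
      rw [← Module.End.mul_apply, ← pow_succ'] at hk
      have := ker_stab N hk
      change (N ^ _) x = 0
      rw [two_mul, pow_add, Module.End.mul_apply, this, map_zero]
    rw [h0, finrank_bot, map_pow_succ'] at h
    omega
  have h1 := hstep (finrank K V)
  have h3 := hodd (2 * finrank K V + 1) (by simp)
  have h4 := hstab A
  have h5 := hstab B
  omega

lemma main_only_if [FiniteDimensional K V] (hs : f.IsSymm) (h2 : (2 : K) ≠ 0)
    (hnd : f.Nondegenerate) (hdim : finrank K V % 4 = 2) (φ : V ≃ₗ[K] V)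
    (hφ : φ ∈ specialOrthGroup f) (hb : IsBireflectionalIn (specialOrthGroup f) φ) :
    ∃ W : Submodule K V, Nd f W ∧ (∀ x ∈ W, φ x ∈ W) ∧ Odd (finrank K W) := by
  by_contra! hno
  obtain ⟨σ, τ, hσ, hτ, hσ2, hτ2, rfl⟩ := hb
  set φ := σ * τ with hφd
  have ss : ∀ x, σ (σ x) = x := fun x => by
    rw [pow_two] at hσ2; exact LinearEquiv.congr_fun hσ2 x
  have tt : ∀ x, τ (τ x) = x := fun x => by
    rw [pow_two] at hτ2; exact LinearEquiv.congr_fun hτ2 x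
  have hφx : ∀ x, φ x = σ (τ x) := fun x => rfl
  have hφs : ∀ x, φ.symm x = τ (σ x) := fun x => by
    rw [LinearEquiv.symm_apply_eq, hφx, tt, ss]
  set N : Module.End K V := (φ : V →ₗ[K] V) - (φ.symm : V →ₗ[K] V) with hNd
  have hN : ∀ x, N x = φ x - φ.symm x := fun x => rfl
  have hσN : ∀ x, σ (N x) = -N (σ x) := by
    intro x
    rw [hN, hN, hφx, hφx, hφs, hφs, map_sub, ss, ss, neg_sub]
  set A : Submodule K V := LinearMap.ker ((σ : V →ₗ[K] V) - 1) with hAd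
  set B : Submodule K V := LinearMap.ker ((σ : V →ₗ[K] V) + 1) with hBd
  have mA : ∀ x, x ∈ A ↔ σ x = x := fun x => by
    rw [hAd, LinearMap.mem_ker, LinearMap.sub_apply, sub_eq_zero]; rfl
  have mB : ∀ x, x ∈ B ↔ σ x = -x := fun x => by
    rw [hBd, LinearMap.mem_ker, LinearMap.add_apply, add_eq_zero_iff_eq_neg]; rfl
  have h20 : ∀ c : K, c = -c → c = 0 := fun c h => by
    have : 2 * c = 0 := by linear_combination h
    exact (mul_eq_zero.1 this).resolve_left h2
  have hAB : IsCompl A B := by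
    constructor
    · rw [disjoint_iff, eq_bot_iff]
      rintro x ⟨hx, hx'⟩
      have h3 := ((mA x).1 hx).symm.trans ((mB x).1 hx')
      have : (2 : K) • x = 0 := by
        rw [two_smul]; nth_rewrite 1 [h3]; simp
      exact (smul_eq_zero.1 this).resolve_left h2
    · rw [codisjoint_iff, eq_top_iff]
      intro x _
      have : x = (2 : K)⁻¹ • (x + σ x) + (2 : K)⁻¹ • (x - σ x) := by
        rw [← smul_add]
        have : x + σ x + (x - σ x) = (2 : K) • x := by rw [two_smul]; abel
        rw [this, smul_smul, inv_mul_cancel₀ h2, one_smul]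
      rw [this]
      refine Submodule.add_mem_sup (A.smul_mem _ ((mA _).2 ?_)) (B.smul_mem _ ((mB _).2 ?_))
      · rw [map_add, ss, add_comm]
      · rw [map_sub, ss, neg_sub]
  have hor : ∀ a ∈ A, ∀ b ∈ B, f a b = 0 := by
    intro a ha b hb
    apply h20
    have := hσ.1 a b
    rw [(mA a).1 ha, (mB b).1 hb, map_neg] at this
    exact this.symm
  have hA : ∀ x ∈ A, N x ∈ B := fun x hx => (mB _).2 (by rw [hσN, (mA x).1 hx])
  have hB : ∀ x ∈ B, N x ∈ A := fun x hx => (mA _).2 (by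
    rw [hσN, (mB x).1 hx, map_neg, neg_neg])
  have heq := T2 hs h2 hnd φ hφ.1 (fun W h h' => by
    have := hno W h h'
    exact this) hN hA hB hAB hor
  have hdet : LinearMap.det (σ : V →ₗ[K] V) = 1 := hσ.2
  rw [det_refl hAB (σ : V →ₗ[K] V) (fun x hx => (mA x).1 hx) (fun x hx => (mB x).1 hx)] at hdet
  have hev : Even (finrank K B) := by
    by_contra hc
    rw [(Nat.not_even_iff_odd.1 hc).neg_one_pow] at hdet
    exact one_ne_zero (h20 (1 : K) hdet.symm)
  have hd := Submodule.finrank_sup_add_finrank_inf_eq A B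
  rw [hAB.sup_eq_top, hAB.inf_eq_bot, finrank_bot, finrank_top] at hd
  obtain ⟨m, hm⟩ := hev
  omega

end

/-- If `dim V ≡ 2 (mod 4)`, then `φ ∈ SO(V)` is bireflectional in `SO(V)` iff
`φ` has an orthogonal summand of odd dimension. -/
theorem stmt1 [FiniteDimensional K V] (hK : ringChar K ≠ 2)
    (f : LinearMap.BilinForm K V) (hsymm : f.IsSymm) (hnd : f.Nondegenerate)
    (hdim : Module.finrank K V % 4 = 2)
    (φ : V ≃ₗ[K] V) (hφ : φ ∈ specialOrthGroup f) :
    IsBireflectionalIn (specialOrthGroup f) φ ↔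
      ∃ U : Submodule K V, U ≠ ⊥ ∧ Invt (φ : V →ₗ[K] V) U ∧
        (f.restrict U).Nondegenerate ∧ Odd (Module.finrank K U) := by
  have h2 : (2 : K) ≠ 0 := Ring.two_ne_zero hK
  constructor
  · intro h
    obtain ⟨W, hW, hi, ho⟩ := main_only_if hsymm h2 hnd hdim φ hφ h
    refine ⟨W, ?_, hi, (nd_iff hsymm W).2 hW, ho⟩
    rintro rfl
    simp at ho
  · rintro ⟨U, _, hi, hU, ho⟩
    exact main_if hsymm h2 (fun x _ h => hnd.1 x (fun y => h y trivial)) φ hφ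
      ((nd_iff hsymm U).1 hU) hi ho

end Biref
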